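/- arXiv:1905.06045 — 8 statements merged into one kernel-verified Lean document; each statement's English description precedes it below -/
import Mathlib

section
/- Let H : Ω → S(m) be continuously differentiable, with repeated eigenvalues λ_1(x) ≤ … ≤ λ_m(x) and eigenprojections P_1(x), …, P_m(x). Fix j ∈ {1,…,m} and assume that the map x ↦ P_j(x) is continuous on Ω. Then P_j is differentiable in Ω and its directional derivatives are given by D_e P_j(x) = P_j(x) · D_e H(x) · A_j(x) + A_j(x) · D_e H(x) · P_j(x) for every x ∈ Ω and every direction e ∈ ℝⁿ; moreover, for every q ∈ ℝ^m the Jacobian matrix of x ↦ P_j(x)q equals ∇_q P_j(x) = P_j(x)·∇_{A_j(x)q} H(x) + A_j(x)·∇_{P_j(x)q} H(x), where ∇_p H(x) denotes the Jacobian matrix of x ↦ H(x)p. -/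
open scoped Classical

/-- Entrywise directional derivative `D_e H(x)` of a matrix-valued map. -/
noncomputable def DH {E : Type*} [NormedAddCommGroup E] [NormedSpace ℝ E] {m : ℕ}
    (H : E → Matrix (Fin m) (Fin m) ℝ) (x e : E) : Matrix (Fin m) (Fin m) ℝ :=
  Matrix.of fun i k => fderiv ℝ (fun y => H y i k) x e

/-- The pseudoinverse `A_j(x)` of `λ_j(x)I - H(x)`. -/
noncomputable def Amat {E : Type*} {m : ℕ} (lam : Fin m → E → ℝ)
    (P : Fin m → E → Matrix (Fin m) (Fin m) ℝ) (j : Fin m) (x : E) :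
    Matrix (Fin m) (Fin m) ℝ :=
  ∑ i ∈ Finset.univ.filter (fun i => lam i x ≠ lam j x),
    (((Finset.univ.filter fun k => lam k x = lam i x).card : ℝ) * (lam j x - lam i x))⁻¹ • P i x

section helpers

variable {E R : Type*} [NormedAddCommGroup E] [NormedSpace ℝ E]
  [NormedRing R] [NormedAlgebra ℝ R]

theorem aux_mul_left {x : E} {C F : E → R} {F' : E →L[ℝ] R} (hC : ContinuousAt C x)
    (hF : HasFDerivAt F F' x) (h0 : F x = 0) :
    HasFDerivAt (fun y => C y * F y) ((ContinuousLinearMap.mul ℝ R (C x)).comp F') x := by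
  have h1 : HasFDerivAt (fun y => C x * F y) ((ContinuousLinearMap.mul ℝ R (C x)).comp F') x :=
    (ContinuousLinearMap.mul ℝ R (C x)).hasFDerivAt.comp x hF
  have h2 : HasFDerivAt (fun y => (C y - C x) * F y) (0 : E →L[ℝ] R) x := by
    rw [hasFDerivAt_iff_isLittleO]
    have hc : (fun y => C y - C x) =o[nhds x] (fun _ => (1 : ℝ)) := by
      rw [Asymptotics.isLittleO_one_iff]
      have : Filter.Tendsto (fun y => C y - C x) (nhds x) (nhds (C x - C x)) :=
        hC.tendsto.sub tendsto_const_nhds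
      simpa using this
    have hf : F =O[nhds x] (fun y => y - x) := by
      simpa [h0] using hF.isBigO_sub
    have := hc.mul_isBigO hf.norm_right
    simpa [h0] using this.norm_right
  have h3 := h1.add h2
  rw [add_zero] at h3
  refine h3.congr_of_eventuallyEq (Filter.Eventually.of_forall fun y => ?_)
  simp [sub_mul]

theorem aux_mul_right {x : E} {C F : E → R} {F' : E →L[ℝ] R} (hC : ContinuousAt C x)
    (hF : HasFDerivAt F F' x) (h0 : F x = 0) :
    HasFDerivAt (fun y => F y * C y)
      (((ContinuousLinearMap.mul ℝ R).flip (C x)).comp F') x := by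
  have h1 : HasFDerivAt (fun y => F y * C x)
      (((ContinuousLinearMap.mul ℝ R).flip (C x)).comp F') x :=
    ((ContinuousLinearMap.mul ℝ R).flip (C x)).hasFDerivAt.comp x hF
  have h2 : HasFDerivAt (fun y => F y * (C y - C x)) (0 : E →L[ℝ] R) x := by
    rw [hasFDerivAt_iff_isLittleO]
    have hc : (fun y => C y - C x) =o[nhds x] (fun _ => (1 : ℝ)) := by
      rw [Asymptotics.isLittleO_one_iff]
      have : Filter.Tendsto (fun y => C y - C x) (nhds x) (nhds (C x - C x)) :=
        hC.tendsto.sub tendsto_const_nhds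
      simpa using this
    have hf : F =O[nhds x] (fun y => y - x) := by
      simpa [h0] using hF.isBigO_sub
    have := hf.norm_right.mul_isLittleO hc
    simpa [h0] using this.norm_right
  have h3 := h1.add h2
  rw [add_zero] at h3
  refine h3.congr_of_eventuallyEq (Filter.Eventually.of_forall fun y => ?_)
  simp [mul_sub]

theorem aux_inv [CompleteSpace R] {x : E} {B : E → R} (hB : ContinuousAt B x) (h0 : B x = 1) :
    ContinuousAt (fun y => Ring.inverse (B y)) x ∧
    (∀ᶠ y in nhds x, Ring.inverse (B y) * B y = 1 ∧ B y * Ring.inverse (B y) = 1) := by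
  constructor
  · have h := NormedRing.inverse_continuousAt (1 : Rˣ)
    have h' : ContinuousAt Ring.inverse (B x) := by rw [h0]; simpa using h
    exact ContinuousAt.comp (f := B) h' hB
  · have : ∀ᶠ z in nhds (B x), IsUnit z := by
      rw [h0]
      exact Units.isOpen.mem_nhds isUnit_one
    filter_upwards [hB.eventually this] with y hy
    exact ⟨Ring.inverse_mul_cancel _ hy, Ring.mul_inverse_cancel _ hy⟩

theorem aux_main [CompleteSpace R] {x : E} {H P : E → R} {lam : E → ℝ} {A : R} {H' : E →L[ℝ] R}
    (hH : HasFDerivAt H H' x) (hP : ContinuousAt P x) (hl : ContinuousAt lam x)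
    (h1 : ∀ᶠ y in nhds x, H y * P y = lam y • P y)
    (h2 : ∀ᶠ y in nhds x, P y * H y = lam y • P y)
    (h3 : ∀ᶠ y in nhds x, P y * P y = P y)
    (a1 : A * (lam x • 1 - H x) = 1 - P x) (a2 : (lam x • 1 - H x) * A = 1 - P x)
    (a3 : A * P x = 0) (a4 : P x * A = 0) :
    ∃ P' : E →L[ℝ] R, HasFDerivAt P P' x ∧ ∀ e, P' e = P x * H' e * A + A * H' e * P x := by
  have p0 : P x * P x = P x := h3.self_of_nhds
  have hB : ContinuousAt (fun y => 1 + (lam y - lam x) • A) x :=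
    continuousAt_const.add ((hl.sub continuousAt_const).smul continuousAt_const)
  obtain ⟨hBc, hBi⟩ := aux_inv hB (by simp)
  have hD : HasFDerivAt (fun y => H y - H x) H' x := hH.sub_const _
  have hR := aux_mul_left (hBc.mul (continuousAt_const (y := A)))
    (aux_mul_right hP hD (by simp)) (by simp)
  have hR' := hR.congr_of_eventuallyEq (f₁ := fun y => (1 - P x) * P y) (by
    filter_upwards [h1, hBi] with y e1 ⟨e2, e3⟩
    have key : (1 + (lam y - lam x) • A) * ((1 - P x) * P y) = A * ((H y - H x) * P y) := by
      have t : (lam x • (1:R) - H x) * P y = (H y - H x) * P y - (lam y - lam x) • P y := by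
        rw [sub_mul, sub_mul, e1, sub_smul, smul_mul_assoc, one_mul]; abel
      have t2 : (1 - P x) * P y = A * ((H y - H x) * P y) - (lam y - lam x) • (A * P y) := by
        rw [← a1, mul_assoc, t, mul_sub, mul_smul_comm]
      have t3 : A * ((1 - P x) * P y) = A * P y := by
        rw [← mul_assoc, mul_sub, a3, mul_one, sub_zero]
      rw [add_mul, one_mul, smul_mul_assoc, t3, t2]; abel
    calc (1 - P x) * P y = (Ring.inverse (1 + (lam y - lam x) • A) * (1 + (lam y - lam x) • A)) * ((1 - P x) * P y) := by rw [e2, one_mul]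
      _ = _ := by rw [mul_assoc, key, ← mul_assoc]; rfl)
  have hS := aux_mul_right ((continuousAt_const (y := A)).mul hBc)
    (aux_mul_left hP hD (by simp)) (by simp)
  have hS' := hS.congr_of_eventuallyEq (f₁ := fun y => P y * (1 - P x)) (by
    filter_upwards [h2, hBi] with y e1 ⟨e2, e3⟩
    have key : (P y * (1 - P x)) * (1 + (lam y - lam x) • A) = (P y * (H y - H x)) * A := by
      have t : P y * (lam x • (1:R) - H x) = P y * (H y - H x) - (lam y - lam x) • P y := by
        rw [mul_sub, mul_sub, e1, sub_smul, mul_smul_comm, mul_one]; abel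
      have t2 : P y * (1 - P x) = (P y * (H y - H x)) * A - (lam y - lam x) • (P y * A) := by
        rw [← a2, ← mul_assoc, t, sub_mul, smul_mul_assoc]
      have t3 : (P y * (1 - P x)) * A = P y * A := by
        rw [mul_assoc, sub_mul, a4, one_mul, sub_zero]
      rw [mul_add, mul_one, mul_smul_comm, t3, t2]; abel
    calc P y * (1 - P x) = (P y * (1 - P x)) * ((1 + (lam y - lam x) • A) * Ring.inverse (1 + (lam y - lam x) • A)) := by rw [e3, mul_one]
      _ = _ := by rw [← mul_assoc, key, mul_assoc]; rfl)
  have hN0 : ContinuousAt (fun y => 1 - (P x - P x * P y * P x)) x := by fun_prop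
  obtain ⟨hNc, hNi⟩ := aux_inv hN0 (by simp [p0])
  have hR0 : (1 - P x) * P x = 0 := by rw [sub_mul, p0, one_mul, sub_self]
  have hSc : ContinuousAt (fun y => P y * (1 - P x)) x := by fun_prop
  have hN := aux_mul_left (hNc.mul (continuousAt_const (y := P x)))
    (aux_mul_right (continuousAt_const (y := P x)) (aux_mul_left hSc hR' hR0) (by simp [hR0]))
    (by simp [hR0])
  have hN' := hN.congr_of_eventuallyEq (f₁ := fun y => P x - P x * P y * P x) (by
    filter_upwards [h3, hNi] with y e1 ⟨e2, e3⟩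
    have key : (1 - (P x - P x * P y * P x)) * (P x - P x * P y * P x)
        = P x * (((P y * (1 - P x)) * ((1 - P x) * P y)) * P x) := by
      have q0 : ∀ z, P x * (P x * z) = P x * z := fun z => by rw [← mul_assoc, p0]
      have q1 : ∀ z, P y * (P y * z) = P y * z := fun z => by rw [← mul_assoc, e1]
      simp only [mul_sub, sub_mul, mul_one, one_mul, mul_assoc, p0, q0, e1, q1]
      abel
    calc P x - P x * P y * P x = (Ring.inverse (1 - (P x - P x * P y * P x)) * (1 - (P x - P x * P y * P x))) * (P x - P x * P y * P x) := by rw [e2, one_mul]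
      _ = _ := by rw [mul_assoc, key, ← mul_assoc]; rfl)
  have hPS := aux_mul_left (continuousAt_const (y := P x)) hS' (by rw [mul_sub, p0, mul_one, sub_self])
  have hfin := ((hR'.add hPS).sub hN').add_const (P x)
  refine ⟨_, hfin.congr_of_eventuallyEq (Filter.Eventually.of_forall fun y => ?_), fun e => ?_⟩
  · simp only [Pi.add_apply, Pi.sub_apply, mul_sub, sub_mul, mul_one, one_mul, mul_assoc]
    abel
  · have : P x * (1 - P x) = 0 := by rw [mul_sub, p0, mul_one, sub_self]
    have q0 : ∀ z, P x * (P x * z) = P x * z := fun z => by rw [← mul_assoc, p0]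
    simp [this, mul_assoc, q0]
    abel

end helpers

section mat
attribute [local instance] Matrix.linftyOpNormedRing Matrix.linftyOpNormedAlgebra

theorem aux_fin {n m : ℕ}
    (Ω : Set (EuclideanSpace ℝ (Fin n))) (hΩo : IsOpen Ω)
    (H : EuclideanSpace ℝ (Fin n) → Matrix (Fin m) (Fin m) ℝ)
    (lam : Fin m → EuclideanSpace ℝ (Fin n) → ℝ)
    (P : Fin m → EuclideanSpace ℝ (Fin n) → Matrix (Fin m) (Fin m) ℝ)
    (hH : ∀ i k, ContDiffOn ℝ 1 (fun y => H y i k) Ω)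
    (hsymm : ∀ x ∈ Ω, (H x).IsSymm)
    (hPsymm : ∀ (j : Fin m) (x), x ∈ Ω → (P j x).IsSymm)
    (hPidem : ∀ (j : Fin m) (x), x ∈ Ω → P j x * P j x = P j x)
    (hHP : ∀ (j : Fin m) (x), x ∈ Ω → H x * P j x = lam j x • P j x)
    (htr : ∀ (j : Fin m) (x), x ∈ Ω →
      (P j x).trace = ((Finset.univ.filter fun i => lam i x = lam j x).card : ℝ))
    (hPeq : ∀ (i j : Fin m) (x), x ∈ Ω → lam i x = lam j x → P i x = P j x)
    (hPorth : ∀ (i j : Fin m) (x), x ∈ Ω → lam i x ≠ lam j x → P i x * P j x = 0)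
    (hcompl : ∀ x ∈ Ω,
      ∑ i, ((Finset.univ.filter fun k => lam k x = lam i x).card : ℝ)⁻¹ • P i x = 1)
    (j : Fin m)
    (hPcont : ∀ i k, ContinuousOn (fun y => P j y i k) Ω)
    (x : EuclideanSpace ℝ (Fin n)) (hx : x ∈ Ω) :
    ∀ (F : Type) [NormedAddCommGroup F] [NormedSpace ℝ F]
        (L : Matrix (Fin m) (Fin m) ℝ →ₗ[ℝ] F), ∃ D : EuclideanSpace ℝ (Fin n) →L[ℝ] F,
          HasFDerivAt (fun y => L (P j y)) D x ∧ ∀ e, D e =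
            L (P j x * DH H x e * Amat lam P j x + Amat lam P j x * DH H x e * P j x) := by
  have hn : Ω ∈ nhds x := hΩo.mem_nhds hx
  have hent : ∀ i k, HasFDerivAt (fun y => H y i k) (fderiv ℝ (fun y => H y i k) x) x :=
    fun i k => (((hH i k).contDiffAt hn).differentiableAt (by norm_num)).hasFDerivAt
  have hHd : HasFDerivAt (fun y => ∑ i, ∑ k, H y i k • Matrix.single i k (1:ℝ))
      (∑ i, ∑ k, (fderiv ℝ (fun y => H y i k) x).smulRight (Matrix.single i k (1:ℝ))) x :=
    HasFDerivAt.fun_sum fun i _ => HasFDerivAt.fun_sum fun k _ => (hent i k).smul_const _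
  have hsum : ∀ M : Matrix (Fin m) (Fin m) ℝ,
      ∑ i, ∑ k, M i k • Matrix.single i k (1:ℝ) = M := fun M => by
    conv_rhs => rw [Matrix.matrix_eq_sum_single M]
    simp
  simp only [hsum] at hHd
  have hPc' : ∀ i k, ContinuousAt (fun y => P j y i k) x := fun i k =>
    (hPcont i k).continuousAt hn
  have hPc : ContinuousAt (fun y => ∑ i, ∑ k, P j y i k • Matrix.single i k (1:ℝ)) x :=
    tendsto_finsetSum _ fun i _ => tendsto_finsetSum _ fun k _ => (hPc' i k).smul continuousAt_const
  simp only [hsum] at hPc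
  have hcard : ∀ i y, ((Finset.univ.filter fun k => lam k y = lam i y).card : ℝ) ≠ 0 := by
    intro i y
    have : (Finset.univ.filter fun k => lam k y = lam i y).Nonempty := ⟨i, by simp⟩
    exact_mod_cast this.card_pos.ne'
  have hPH : ∀ (i : Fin m) (y), y ∈ Ω → P i y * H y = lam i y • P i y := by
    intro i y hy
    have := congrArg Matrix.transpose (hHP i y hy)
    rwa [Matrix.transpose_mul, Matrix.transpose_smul, (hPsymm i y hy).eq, (hsymm y hy).eq] at this
  have hlc : ContinuousAt (lam j) x := by
    have htc : ∀ {G : EuclideanSpace ℝ (Fin n) → Matrix (Fin m) (Fin m) ℝ},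
        ContinuousAt G x → ContinuousAt (fun y => (G y).trace) x := by
      intro G hG
      exact (LinearMap.continuous_of_finiteDimensional
        (Matrix.traceLinearMap (Fin m) ℝ ℝ)).continuousAt.comp hG
    have h : ContinuousAt (fun y => (H y * P j y).trace / (P j y).trace) x := by
      refine (htc (hHd.continuousAt.mul hPc)).div (htc hPc) ?_
      rw [htr j x hx]; exact hcard j x
    refine h.congr ?_
    filter_upwards [hn] with y hy
    rw [hHP j y hy, Matrix.trace_smul, smul_eq_mul, mul_div_assoc, div_self, mul_one]
    rw [htr j y hy]; exact hcard j y
  have hsplit : ∑ i ∈ Finset.univ.filter (fun i => lam i x ≠ lam j x),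
      ((Finset.univ.filter fun k => lam k x = lam i x).card : ℝ)⁻¹ • P i x = 1 - P j x := by
    rw [eq_sub_iff_add_eq, ← hcompl x hx, add_comm]
    rw [← Finset.sum_filter_add_sum_filter_not Finset.univ (fun i => lam i x = lam j x)]
    congr 1
    rw [Finset.sum_congr rfl (g := fun _ =>
      ((Finset.univ.filter fun k => lam k x = lam j x).card : ℝ)⁻¹ • P j x)]
    · rw [Finset.sum_const, ← Nat.cast_smul_eq_nsmul ℝ, smul_smul, mul_inv_cancel₀ (hcard j x),
        one_smul]
    · intro i hi
      have : lam i x = lam j x := by simpa using hi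
      rw [hPeq i j x hx this, this]
  obtain ⟨P', hP', hf⟩ := aux_main (A := Amat lam P j x) hHd hPc hlc
    (by filter_upwards [hn] with y hy using hHP j y hy)
    (by filter_upwards [hn] with y hy using hPH j y hy)
    (by filter_upwards [hn] with y hy using hPidem j y hy)
    (by
      rw [← hsplit, Amat, Finset.sum_mul]
      refine Finset.sum_congr rfl fun i hi => ?_
      have hne : lam i x ≠ lam j x := by simpa using hi
      rw [smul_mul_assoc, mul_sub (P i x), hPH i x hx, mul_smul_comm, mul_one, ← sub_smul, smul_smul,
        mul_inv, mul_assoc, inv_mul_cancel₀ (sub_ne_zero.2 hne.symm), mul_one])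
    (by
      rw [← hsplit, Amat, Finset.mul_sum]
      refine Finset.sum_congr rfl fun i hi => ?_
      have hne : lam i x ≠ lam j x := by simpa using hi
      rw [mul_smul_comm, sub_mul, hHP i x hx, smul_mul_assoc, one_mul, ← sub_smul, smul_smul,
        mul_inv, mul_assoc, inv_mul_cancel₀ (sub_ne_zero.2 hne.symm), mul_one])
    (by
      rw [Amat, Finset.sum_mul]
      refine Finset.sum_eq_zero fun i hi => ?_
      have hne : lam i x ≠ lam j x := by simpa using hi
      rw [smul_mul_assoc, hPorth i j x hx hne, smul_zero])
    (by
      rw [Amat, Finset.mul_sum]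
      refine Finset.sum_eq_zero fun i hi => ?_
      have hne : lam i x ≠ lam j x := by simpa using hi
      rw [mul_smul_comm, hPorth j i x hx hne.symm, smul_zero])
  intro F _ _ L
  refine ⟨L.toContinuousLinearMap.comp P', L.toContinuousLinearMap.hasFDerivAt.comp x hP',
      fun e => ?_⟩
  have h5 : (∑ i, ∑ k, (fderiv ℝ (fun y => H y i k) x).smulRight (Matrix.single i k (1:ℝ))) e
        = DH H x e := by
    rw [← hsum (DH H x e)]
    simp [DH]
  have h6 := hf e
  exact congrArg L (h6.trans (congrArg (fun Z : Matrix (Fin m) (Fin m) ℝ =>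
    P j x * Z * Amat lam P j x + Amat lam P j x * Z * P j x) h5))

end mat

theorem total_derivative_of_eigenprojections {n m : ℕ}
    (Ω : Set (EuclideanSpace ℝ (Fin n))) (hΩo : IsOpen Ω) (hΩc : IsConnected Ω)
    (H : EuclideanSpace ℝ (Fin n) → Matrix (Fin m) (Fin m) ℝ)
    (lam : Fin m → EuclideanSpace ℝ (Fin n) → ℝ)
    (P : Fin m → EuclideanSpace ℝ (Fin n) → Matrix (Fin m) (Fin m) ℝ)
    (hH : ∀ i k, ContDiffOn ℝ 1 (fun y => H y i k) Ω)
    (hsymm : ∀ x ∈ Ω, (H x).IsSymm)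
    (hmono : ∀ x ∈ Ω, Monotone fun i => lam i x)
    (hPsymm : ∀ (j : Fin m) (x), x ∈ Ω → (P j x).IsSymm)
    (hPidem : ∀ (j : Fin m) (x), x ∈ Ω → P j x * P j x = P j x)
    (hHP : ∀ (j : Fin m) (x), x ∈ Ω → H x * P j x = lam j x • P j x)
    (htr : ∀ (j : Fin m) (x), x ∈ Ω →
      (P j x).trace = ((Finset.univ.filter fun i => lam i x = lam j x).card : ℝ))
    (hPeq : ∀ (i j : Fin m) (x), x ∈ Ω → lam i x = lam j x → P i x = P j x)
    (hPorth : ∀ (i j : Fin m) (x), x ∈ Ω → lam i x ≠ lam j x → P i x * P j x = 0)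
    (hcompl : ∀ x ∈ Ω,
      ∑ i, ((Finset.univ.filter fun k => lam k x = lam i x).card : ℝ)⁻¹ • P i x = 1)
    (j : Fin m)
    (hPcont : ∀ i k, ContinuousOn (fun y => P j y i k) Ω) :
    ∀ x ∈ Ω,
      (∀ i k, DifferentiableAt ℝ (fun y => P j y i k) x) ∧
      (∀ (e : EuclideanSpace ℝ (Fin n)) (i k : Fin m),
        HasDerivAt (fun h : ℝ => P j (x + h • e) i k)
          ((P j x * DH H x e * Amat lam P j x + Amat lam P j x * DH H x e * P j x) i k) 0) ∧
      (∀ (q : Fin m → ℝ) (e : EuclideanSpace ℝ (Fin n)),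
        fderiv ℝ (fun y => (P j y).mulVec q) x e
          = (P j x).mulVec ((DH H x e).mulVec ((Amat lam P j x).mulVec q))
            + (Amat lam P j x).mulVec ((DH H x e).mulVec ((P j x).mulVec q))) := by
  intro x hx
  have hL := aux_fin Ω hΩo H lam P hH hsymm hPsymm hPidem hHP htr hPeq hPorth hcompl
    j hPcont x hx
  refine ⟨fun i k => ?_, fun e i k => ?_, fun q e => ?_⟩
  · obtain ⟨D, hD, -⟩ := hL ℝ (Matrix.entryLinearMap ℝ ℝ i k)
    exact hD.differentiableAt
  · obtain ⟨D, hD, hD'⟩ := hL ℝ (Matrix.entryLinearMap ℝ ℝ i k)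
    have := hD.hasLineDerivAt e
    rw [hD'] at this
    exact this
  · obtain ⟨D, hD, hD'⟩ := hL (Fin m → ℝ) ((Matrix.mulVecBilin ℝ ℝ).flip q)
    have h : fderiv ℝ (fun y => (P j y).mulVec q) x = D := hD.fderiv
    rw [h, hD']
    simp [Matrix.add_mulVec, Matrix.mulVec_mulVec, mul_assoc]
end

section
/- Let H : Ω → S(m) be continuously differentiable, with repeated eigenvalues λ_1(x) ≤ … ≤ λ_m(x) and eigenprojections P_1(x), …, P_m(x). Fix j ∈ {1,…,m} and assume that tr P_j(x) is constant in Ω. Then P_j is directionally differentiable in Ω, and for every x ∈ Ω and every e ∈ ℝⁿ the two-sided directional derivative exists and equals D_e P_j(x) = P_j(x) · D_e H(x) · A_j(x) + A_j(x) · D_e H(x) · P_j(x). -/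
open scoped Classical

/-- Second-order directional derivative `D_b D_a H(x)` (first `a`, then `b`). -/
noncomputable def DH2 {E : Type*} [NormedAddCommGroup E] [NormedSpace ℝ E] {m : ℕ}
    (H : E → Matrix (Fin m) (Fin m) ℝ) (x a b : E) : Matrix (Fin m) (Fin m) ℝ :=
  Matrix.of fun i k => fderiv ℝ (fun y => DH H y a i k) x b

structure Spec {m : ℕ} (H : Matrix (Fin m) (Fin m) ℝ) (l : Fin m → ℝ)
    (P : Fin m → Matrix (Fin m) (Fin m) ℝ) : Prop where
  hs : H.IsSymm
  mono : Monotone l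
  sym : ∀ i, (P i).IsSymm
  idem : ∀ i, P i * P i = P i
  hHP : ∀ i, H * P i = l i • P i
  tr : ∀ j, (P j).trace = ((Finset.univ.filter fun i => l i = l j).card : ℝ)
  peq : ∀ i j, l i = l j → P i = P j
  orth : ∀ i j, l i ≠ l j → P i * P j = 0
  compl : ∑ i, ((Finset.univ.filter fun k => l k = l i).card : ℝ)⁻¹ • P i = 1

namespace Spec

variable {m : ℕ} {H : Matrix (Fin m) (Fin m) ℝ} {l : Fin m → ℝ}
    {P : Fin m → Matrix (Fin m) (Fin m) ℝ}

theorem card_ne (l : Fin m → ℝ) (i : Fin m) :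
    ((Finset.univ.filter fun k => l k = l i).card : ℝ) ≠ 0 := by
  have : (Finset.univ.filter fun k => l k = l i).Nonempty := ⟨i, by simp⟩
  exact_mod_cast this.card_pos.ne'

theorem hPH (S : Spec H l P) (i : Fin m) : P i * H = l i • P i := by
  have := congrArg Matrix.transpose (S.hHP i)
  rwa [Matrix.transpose_mul, Matrix.transpose_smul, (S.sym i).eq, S.hs.eq] at this

/-- spectral projection -/
theorem proj (S : Spec H l P) (p : ℝ → Prop) :
    ∃ V : Submodule ℝ (Fin m → ℝ),
      Module.finrank ℝ V = (Finset.univ.filter fun i => p (l i)).card ∧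
      ∀ v ∈ V, ∀ i, ¬ p (l i) → (P i).mulVec v = 0 := by
  set s := Finset.univ.filter fun i => p (l i) with hs
  set Q : Matrix (Fin m) (Fin m) ℝ :=
    ∑ i ∈ s, ((Finset.univ.filter fun k => l k = l i).card : ℝ)⁻¹ • P i with hQ
  have h0 : ∀ i, ¬ p (l i) → P i * Q = 0 := by
    intro i hi
    rw [hQ, Finset.mul_sum]
    refine Finset.sum_eq_zero fun k hk => ?_
    have hk' : p (l k) := by simpa [hs] using hk
    rw [Matrix.mul_smul, S.orth i k (fun h => hi (h ▸ hk')), smul_zero]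
  have h1 : ∀ i, p (l i) → Q * P i = P i := by
    intro i hi
    conv_rhs => rw [← one_mul (P i), ← S.compl]
    rw [hQ, Finset.sum_mul, Finset.sum_mul]
    refine Finset.sum_subset (Finset.subset_univ _) fun k _ hk => ?_
    have hk' : ¬ p (l k) := by simpa [hs] using hk
    rw [Matrix.smul_mul, S.orth k i (fun h => hk' (h ▸ hi)), smul_zero]
  have h2 : Q * Q = Q := by
    conv_lhs => rw [hQ]
    conv_lhs => arg 1; rw [← hQ]
    rw [Finset.mul_sum]
    conv_rhs => rw [hQ]
    refine Finset.sum_congr rfl fun i hi => ?_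
    rw [Matrix.mul_smul, h1 i (by simpa [hs] using hi)]
  have h3 : Q.trace = (s.card : ℝ) := by
    rw [hQ, Matrix.trace_sum, Finset.card_eq_sum_ones]
    push_cast
    refine Finset.sum_congr rfl fun i hi => ?_
    rw [Matrix.trace_smul, S.tr i, smul_eq_mul, inv_mul_cancel₀ (card_ne l i)]
  refine ⟨LinearMap.range (Matrix.toLin' Q), ?_, ?_⟩
  · have hid : IsIdempotentElem (Matrix.toLin' Q) := by
      show Matrix.toLin' Q * Matrix.toLin' Q = _
      rw [Module.End.mul_eq_comp, ← Matrix.toLin'_mul, h2]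
    have := (LinearMap.IsIdempotentElem.isProj_range _ hid).trace
    rw [Matrix.trace_toLin'_eq, h3] at this
    exact_mod_cast this.symm
  · rintro v ⟨w, rfl⟩ i hi
    rw [Matrix.toLin'_apply, Matrix.mulVec_mulVec, h0 i hi, Matrix.zero_mulVec]

theorem nonneg (S : Spec H l P) (v : Fin m → ℝ) (i : Fin m) : 0 ≤ v ⬝ᵥ (P i).mulVec v := by
  have : v ⬝ᵥ (P i).mulVec v = (P i).mulVec v ⬝ᵥ (P i).mulVec v := by
    conv_lhs => rw [← S.idem i, ← Matrix.mulVec_mulVec, Matrix.dotProduct_mulVec]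
    rw [← Matrix.mulVec_transpose, (S.sym i).eq]
  rw [this]
  exact Finset.sum_nonneg fun _ _ => mul_self_nonneg _

theorem quad (S : Spec H l P) (v : Fin m → ℝ) (c : ℝ) :
    c * (v ⬝ᵥ v) - v ⬝ᵥ H.mulVec v =
      ∑ i, ((Finset.univ.filter fun k => l k = l i).card : ℝ)⁻¹ *
        ((c - l i) * (v ⬝ᵥ (P i).mulVec v)) := by
  have e1 : v ⬝ᵥ v = ∑ i, ((Finset.univ.filter fun k => l k = l i).card : ℝ)⁻¹ *
        (v ⬝ᵥ (P i).mulVec v) := by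
    conv_lhs => arg 2; rw [← Matrix.one_mulVec v, ← S.compl]
    simp only [Matrix.sum_mulVec, dotProduct_sum, Matrix.smul_mulVec, dotProduct_smul, smul_eq_mul]
  have e2 : v ⬝ᵥ H.mulVec v = ∑ i, ((Finset.univ.filter fun k => l k = l i).card : ℝ)⁻¹ *
        (l i * (v ⬝ᵥ (P i).mulVec v)) := by
    conv_lhs => rw [← mul_one H, ← S.compl]
    simp only [Finset.mul_sum, Matrix.mul_smul, S.hHP, Matrix.sum_mulVec, dotProduct_sum,
      Matrix.smul_mulVec, dotProduct_smul, smul_eq_mul]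
  rw [e1, e2, Finset.mul_sum, ← Finset.sum_sub_distrib]
  exact Finset.sum_congr rfl fun i _ => by ring

theorem low (S : Spec H l P) (j : Fin m) : ∃ V : Submodule ℝ (Fin m → ℝ),
    (j : ℕ) + 1 ≤ Module.finrank ℝ V ∧ ∀ v ∈ V, v ⬝ᵥ H.mulVec v ≤ l j * (v ⬝ᵥ v) := by
  obtain ⟨V, hV, h⟩ := S.proj (fun t => t ≤ l j)
  refine ⟨V, ?_, fun v hv => ?_⟩
  · rw [hV, ← Fin.card_Iic]
    exact Finset.card_le_card fun i hi => by simpa using S.mono (by simpa using hi)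
  · rw [← sub_nonneg, S.quad]
    refine Finset.sum_nonneg fun i _ => mul_nonneg (by positivity) ?_
    by_cases hi : l i ≤ l j
    · exact mul_nonneg (by linarith) (S.nonneg v i)
    · simp [h v hv i hi]

theorem high (S : Spec H l P) (j : Fin m) : ∃ V : Submodule ℝ (Fin m → ℝ),
    m - (j : ℕ) ≤ Module.finrank ℝ V ∧ ∀ v ∈ V, l j * (v ⬝ᵥ v) ≤ v ⬝ᵥ H.mulVec v := by
  obtain ⟨V, hV, h⟩ := S.proj (fun t => l j ≤ t)
  refine ⟨V, ?_, fun v hv => ?_⟩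
  · rw [hV, ← Fin.card_Ici]
    exact Finset.card_le_card fun i hi => by simpa using S.mono (by simpa using hi)
  · rw [← sub_nonpos, S.quad]
    refine Finset.sum_nonpos fun i _ => mul_nonpos_of_nonneg_of_nonpos (by positivity) ?_
    by_cases hi : l j ≤ l i
    · exact mul_nonpos_of_nonpos_of_nonneg (by linarith) (S.nonneg v i)
    · simp [h v hv i hi]

theorem bound (D : Matrix (Fin m) (Fin m) ℝ) (v : Fin m → ℝ) :
    v ⬝ᵥ D.mulVec v ≤ (∑ a, ∑ b, |D a b|) * (v ⬝ᵥ v) := by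
  have hv : ∀ a, v a * v a ≤ v ⬝ᵥ v := fun a =>
    Finset.single_le_sum (f := fun a => v a * v a) (fun _ _ => mul_self_nonneg _)
      (Finset.mem_univ a)
  simp only [Matrix.mulVec, dotProduct] at hv ⊢
  rw [Finset.sum_mul]
  refine Finset.sum_le_sum fun a _ => ?_
  rw [Finset.mul_sum, Finset.sum_mul]
  refine Finset.sum_le_sum fun b _ => ?_
  have h1 : |v a * v b| ≤ ∑ i, v i * v i := by
    rw [abs_le]
    constructor <;> nlinarith [hv a, hv b, sq_nonneg (v a - v b), sq_nonneg (v a + v b)]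
  calc v a * (D a b * v b) = D a b * (v a * v b) := by ring
    _ ≤ |D a b * (v a * v b)| := le_abs_self _
    _ = |D a b| * |v a * v b| := abs_mul _ _
    _ ≤ _ := mul_le_mul_of_nonneg_left h1 (abs_nonneg _)

theorem weyl {H' : Matrix (Fin m) (Fin m) ℝ} {l' : Fin m → ℝ}
    {P' : Fin m → Matrix (Fin m) (Fin m) ℝ} (S : Spec H l P) (S' : Spec H' l' P') (j : Fin m) :
    l j - l' j ≤ ∑ a, ∑ b, |(H - H') a b| := by
  obtain ⟨V, hV, h⟩ := S.high j
  obtain ⟨W, hW, h'⟩ := S'.low j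
  have hnd : ¬ Disjoint V W := by
    intro hd
    have := Submodule.finrank_add_finrank_le_of_disjoint hd
    rw [Module.finrank_fin_fun] at this
    have := j.2
    omega
  rw [Submodule.disjoint_def] at hnd
  push Not at hnd
  obtain ⟨v, hv, hw, h0⟩ := hnd
  have hpos : 0 < v ⬝ᵥ v := by
    have h1 : v ⬝ᵥ v ≠ 0 := by simpa using h0
    have : 0 ≤ v ⬝ᵥ v := Finset.sum_nonneg fun _ _ => mul_self_nonneg _
    exact lt_of_le_of_ne this h1.symm
  have hb := bound (H - H') v
  rw [Matrix.sub_mulVec, dotProduct_sub] at hb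
  have := h v hv
  have := h' v hw
  refine le_of_mul_le_mul_right ?_ hpos
  linarith

theorem weyl_abs {H' : Matrix (Fin m) (Fin m) ℝ} {l' : Fin m → ℝ}
    {P' : Fin m → Matrix (Fin m) (Fin m) ℝ} (S : Spec H l P) (S' : Spec H' l' P') (j : Fin m) :
    |l j - l' j| ≤ ∑ a, ∑ b, |(H - H') a b| := by
  rw [abs_le]
  have h1 := S.weyl S' j
  have h2 := S'.weyl S j
  have : ∑ a, ∑ b, |(H' - H) a b| = ∑ a, ∑ b, |(H - H') a b| := by
    simp only [Matrix.sub_apply, abs_sub_comm]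
  constructor <;> linarith

/-- pseudo-inverse -/
noncomputable def A (l : Fin m → ℝ) (P : Fin m → Matrix (Fin m) (Fin m) ℝ) (j : Fin m) :
    Matrix (Fin m) (Fin m) ℝ :=
  ∑ i ∈ Finset.univ.filter (fun i => l i ≠ l j),
    (((Finset.univ.filter fun k => l k = l i).card : ℝ) * (l j - l i))⁻¹ • P i

theorem A_symm (S : Spec H l P) (j : Fin m) : (A l P j).transpose = A l P j := by
  simp only [A, Matrix.transpose_sum, Matrix.transpose_smul, (S.sym _).eq]

theorem A_mul_P (S : Spec H l P) (j : Fin m) : A l P j * P j = 0 := by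
  rw [A, Finset.sum_mul]
  refine Finset.sum_eq_zero fun i hi => ?_
  rw [Matrix.smul_mul, S.orth i j (by simpa using hi), smul_zero]

theorem A_mul (S : Spec H l P) (j : Fin m) : A l P j * (l j • 1 - H) = 1 - P j := by
  have hP : ∑ i ∈ Finset.univ.filter (fun i => l i = l j),
      ((Finset.univ.filter fun k => l k = l i).card : ℝ)⁻¹ • P i = P j := by
    have : ∀ i ∈ Finset.univ.filter (fun i => l i = l j),
      ((Finset.univ.filter fun k => l k = l i).card : ℝ)⁻¹ • P i =
      ((Finset.univ.filter fun k => l k = l j).card : ℝ)⁻¹ • P j := by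
      intro i hi
      have hi : l i = l j := by simpa using hi
      rw [hi, S.peq i j hi]
    rw [Finset.sum_congr rfl this, Finset.sum_const, ← Nat.cast_smul_eq_nsmul ℝ, smul_smul,
      mul_inv_cancel₀ (card_ne l j), one_smul]
  have hc := S.compl
  rw [← Finset.sum_filter_add_sum_filter_not Finset.univ (fun i => l i = l j), hP] at hc
  rw [← eq_sub_iff_add_eq'.mpr hc, A, Finset.sum_mul]
  refine Finset.sum_congr rfl fun i hi => ?_
  have hi : l i ≠ l j := by simpa using hi
  have : l j - l i ≠ 0 := sub_ne_zero.mpr hi.symm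
  rw [Matrix.smul_mul, mul_sub (P i), S.hPH, Matrix.mul_smul, mul_one, ← sub_smul, smul_smul,
    mul_inv, mul_assoc, inv_mul_cancel₀ this, mul_one]

end Spec

section frob

open scoped Matrix.Norms.Frobenius
open Asymptotics Filter Topology Matrix

variable {m : ℕ}

theorem frob_sq (M : Matrix (Fin m) (Fin m) ℝ) : ‖M‖ ^ 2 = (M * Mᵀ).trace := by
  rw [Matrix.frobenius_norm_def, ← Real.sqrt_eq_rpow, Real.sq_sqrt (by positivity)]
  simp only [Matrix.trace, Matrix.diag, Matrix.mul_apply, Matrix.transpose_apply]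
  refine Finset.sum_congr rfl fun a _ => Finset.sum_congr rfl fun b _ => ?_
  rw [Real.rpow_two, Real.norm_eq_abs, sq_abs, sq]

theorem frob_eq {P Q : Matrix (Fin m) (Fin m) ℝ} (hP : P.IsSymm) (hQ : Q.IsSymm)
    (hP2 : P * P = P) (hQ2 : Q * Q = Q) (ht : P.trace = Q.trace) :
    ‖Q * (1 - P)‖ = ‖(1 - Q) * P‖ := by
  have : ‖Q * (1 - P)‖ ^ 2 = ‖(1 - Q) * P‖ ^ 2 := by
    rw [frob_sq, frob_sq]
    simp only [transpose_mul, transpose_sub, transpose_one, hP.eq, hQ.eq]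
    have e1 : Q * (1 - P) * ((1 - P) * Q) = Q * Q - Q * P * Q - Q * P * Q + Q * (P * P) * Q := by
      noncomm_ring
    have e2 : (1 - Q) * P * (P * (1 - Q)) = P * P - Q * (P * P) - P * P * Q + Q * (P * P) * Q := by
      noncomm_ring
    rw [e1, e2, hP2, hQ2]
    have h : (Q * P * Q).trace = (Q * P).trace := by
      rw [Matrix.trace_mul_comm, ← mul_assoc, hQ2]
    simp only [Matrix.trace_add, Matrix.trace_sub, h, ht, Matrix.trace_mul_comm P Q]
  exact (pow_left_inj₀ (norm_nonneg _) (norm_nonneg _) two_ne_zero).mp this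

theorem decomp {P Q A E H H' : Matrix (Fin m) (Fin m) ℝ} {l l' : ℝ}
    (hP : P.IsSymm) (hQ : Q.IsSymm)
    (hP2 : P * P = P) (hQ2 : Q * Q = Q) (hA : Aᵀ = A) (hAQ : A * Q = 0)
    (hA1 : A * (l • 1 - H) = 1 - Q) (hHP : H' * P = l' • P)
    (hE : E = H' - H) (hEs : Eᵀ = E) :
    (1 - Q) * P = (l - l') • (A * P) + A * E * P ∧
    P - Q = (1 - Q) * P - Q * (1 - P) ∧
    P = Q + (A * E * Q + Q * E * A) + ((l - l') • (A * (P - Q)) + A * E * (P - Q)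
      + (l - l') • (Q * (P - Q) * A) + Q * (P - Q) * E * A
      - Q * (1 - P) * (Q * (1 - P))ᵀ) := by
  have h1 : (1 - Q) * P = (l - l') • (A * P) + A * E * P := by
    rw [← hA1, hE, mul_assoc, mul_assoc A (H' - H), ← Matrix.mul_smul, ← mul_add, sub_mul, sub_mul, hHP]
    congr 1
    rw [sub_smul, smul_mul_assoc, one_mul]
    abel
  have hQA : Q * A = 0 := by
    have := congrArg transpose hAQ
    rwa [transpose_mul, hA, hQ.eq, transpose_zero] at this
  have h2 : P * (1 - Q) = (l - l') • (P * A) + P * E * A := by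
    have := congrArg transpose h1
    simpa only [transpose_mul, transpose_add, transpose_smul, transpose_sub, transpose_one, hP.eq,
      hQ.eq, hA, hEs, mul_assoc] using this
  refine ⟨h1, by noncomm_ring, ?_⟩
  have h3 : Q * (1 - P) * (Q * (1 - P))ᵀ = Q - Q * P * Q := by
    simp only [transpose_mul, transpose_sub, transpose_one, hP.eq, hQ.eq]
    have e1 : Q * (1 - P) * ((1 - P) * Q) = Q * Q - Q * P * Q - Q * P * Q + Q * (P * P) * Q := by
      noncomm_ring
    rw [e1, hP2, hQ2]; abel
  have h4 : P = Q + (1 - Q) * P + Q * (P * (1 - Q)) - (Q - Q * P * Q) := by noncomm_ring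
  rw [h3]
  conv_lhs => rw [h4, h1, h2]
  have e1 : A * (P - Q) = A * P := by rw [mul_sub, hAQ, sub_zero]
  have e2 : Q * (P - Q) * A = Q * P * A := by
    rw [mul_sub, sub_mul, hQ2, hQA, sub_zero]
  have e3 : Q * (P - Q) * E * A = Q * P * E * A - Q * E * A := by
    rw [mul_sub, hQ2, sub_mul, sub_mul]
  rw [e1, e2, e3, mul_add, Matrix.mul_smul, mul_sub (A * E)]
  simp only [mul_assoc]
  abel

theorem main_deriv (P E : ℝ → Matrix (Fin m) (Fin m) ℝ) (l : ℝ → ℝ)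
    (A H E' : Matrix (Fin m) (Fin m) ℝ) (d : ℝ)
    (hP : ∀ᶠ h in 𝓝 (0:ℝ), (P h).IsSymm ∧ P h * P h = P h ∧ (P h).trace = d ∧
      (H + E h) * P h = l h • P h ∧ (E h)ᵀ = E h)
    (hA : Aᵀ = A) (hAQ : A * P 0 = 0) (hA1 : A * (l 0 • 1 - H) = 1 - P 0)
    (hl : (fun h => l 0 - l h) =O[𝓝 0] (fun h : ℝ => h))
    (hE0 : E 0 = 0) (hE : HasDerivAt E E' 0) :
    HasDerivAt P (P 0 * E' * A + A * E' * P 0) 0 := by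
  obtain ⟨hQ, hQ2, hQt, -, -⟩ := hP.self_of_nhds
  have mc : ∀ {f : ℝ → Matrix (Fin m) (Fin m) ℝ} {g : ℝ → ℝ} (C : Matrix (Fin m) (Fin m) ℝ),
      f =O[𝓝 0] g → (fun h => C * f h) =O[𝓝 0] g := by
    intro f g C hf
    simpa using (isBigO_const_const C (one_ne_zero (α := ℝ)) (𝓝 0)).mul hf
  have hEO : E =O[𝓝 0] (fun h : ℝ => h) := by
    have := hE.isBigO_sub
    simpa [hE0] using this
  have hdec : ∀ᶠ h in 𝓝 (0:ℝ), _ := hP.mono fun h hh =>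
    decomp (l := l 0) (E := E h) (H := H) (H' := H + E h) hh.1 hQ hh.2.1 hQ2 hA hAQ hA1
      hh.2.2.2.1 (by abel) hh.2.2.2.2
  have hPb : P =O[𝓝 0] (fun _ : ℝ => (1:ℝ)) := by
    refine IsBigO.of_bound (1 + d) (hP.mono fun h hh => ?_)
    have := frob_sq (P h)
    rw [hh.1.eq, hh.2.1, hh.2.2.1] at this
    rw [norm_one, mul_one]
    nlinarith [sq_nonneg (‖P h‖ - 1)]
  have hN : (fun h => (1 - P 0) * P h) =O[𝓝 0] (fun h : ℝ => h) := by
    have h1 : (fun h => (l 0 - l h) • (A * P h) + A * E h * P h) =O[𝓝 0] (fun h : ℝ => h) := by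
      have a1 : (fun h => A * P h) =O[𝓝 0] (fun _ : ℝ => (1:ℝ)) := mc A hPb
      have a2 : (fun h => A * E h) =O[𝓝 0] (fun h : ℝ => h) := mc A hEO
      have := (hl.smul a1).add (f₂ := fun h => A * E h * P h) (by simpa using a2.mul hPb)
      simpa using this
    exact h1.congr' (hdec.mono fun h hh => hh.1.symm) (EventuallyEq.refl _ _)
  have hM : (fun h => P 0 * (1 - P h)) =O[𝓝 0] (fun h : ℝ => h) := by
    refine (IsBigO.of_bound 1 (hP.mono fun h hh => ?_)).trans hN
    rw [one_mul, frob_eq hh.1 hQ hh.2.1 hQ2 (hh.2.2.1.trans hQt.symm)]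
  have hMt : (fun h => (P 0 * (1 - P h))ᵀ) =O[𝓝 0] (fun h : ℝ => h) := by
    refine (IsBigO.of_bound 1 (Eventually.of_forall fun h => ?_)).trans hM
    rw [one_mul, Matrix.frobenius_norm_transpose]
  have hD : (fun h => P h - P 0) =O[𝓝 0] (fun h : ℝ => h) :=
    (hN.sub hM).congr' (hdec.mono fun h hh => hh.2.1.symm) (EventuallyEq.refl _ _)
  set R : ℝ → Matrix (Fin m) (Fin m) ℝ := fun h =>
    (l 0 - l h) • (A * (P h - P 0)) + A * E h * (P h - P 0)
      + (l 0 - l h) • (P 0 * (P h - P 0) * A) + P 0 * (P h - P 0) * E h * A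
      - P 0 * (1 - P h) * (P 0 * (1 - P h))ᵀ with hR
  have hRO : R =O[𝓝 0] (fun h : ℝ => h * h) := by
    have cm : ∀ {f : ℝ → Matrix (Fin m) (Fin m) ℝ} {g : ℝ → ℝ} (C : Matrix (Fin m) (Fin m) ℝ),
        f =O[𝓝 0] g → (fun h => f h * C) =O[𝓝 0] g := by
      intro f g C hf
      simpa using hf.mul (isBigO_const_const C (one_ne_zero (α := ℝ)) (𝓝 0))
    have t1 := hl.smul (mc A hD)
    have t2 := (mc A hEO).mul hD
    have t3 := hl.smul (cm A (mc (P 0) hD))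
    have t4 := cm A ((mc (P 0) hD).mul hEO)
    have t5 := hM.mul hMt
    exact (((t1.add t2).add t3).add t4).sub t5
  have hR0 : HasDerivAt R 0 0 := by
    have : HasFDerivAt R (0 : ℝ →L[ℝ] Matrix (Fin m) (Fin m) ℝ) 0 := by
      refine IsBigO.hasFDerivAt (n := 2) ?_ (by norm_num)
      simpa [sq] using hRO
    simpa using this.hasDerivAt
  have hmain : HasDerivAt (fun h => P 0 + (A * E h * P 0 + P 0 * E h * A) + R h)
      (A * E' * P 0 + P 0 * E' * A + 0) 0 :=
    ((((hE.const_mul A).mul_const (P 0)).add ((hE.const_mul (P 0)).mul_const A)).const_add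
      (P 0)).add hR0
  rw [add_zero, add_comm] at hmain
  exact hmain.congr_of_eventuallyEq (hdec.mono fun h hh => hh.2.2)

theorem main_entry (P E : ℝ → Matrix (Fin m) (Fin m) ℝ) (l : ℝ → ℝ)
    (A H E' : Matrix (Fin m) (Fin m) ℝ) (d : ℝ)
    (hP : ∀ᶠ h in 𝓝 (0:ℝ), (P h).IsSymm ∧ P h * P h = P h ∧ (P h).trace = d ∧
      (H + E h) * P h = l h • P h ∧ (E h)ᵀ = E h)
    (hA : Aᵀ = A) (hAQ : A * P 0 = 0) (hA1 : A * (l 0 • 1 - H) = 1 - P 0)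
    (hl : ∀ᶠ h in 𝓝 (0:ℝ), |l 0 - l h| ≤ ∑ a, ∑ b, |E h a b|)
    (hE0 : E 0 = 0) (hE : ∀ a b, HasDerivAt (fun h => E h a b) (E' a b) 0) (i k : Fin m) :
    HasDerivAt (fun h => P h i k) ((P 0 * E' * A + A * E' * P 0) i k) 0 := by
  have hE1 : HasDerivAt E E' 0 := by
    have e : ∀ M : Matrix (Fin m) (Fin m) ℝ,
        M = ∑ a, ∑ b, M a b • Matrix.single a b (1:ℝ) := by
      intro M
      conv_lhs => rw [Matrix.matrix_eq_sum_single M]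
      simp
    have h1 : HasDerivAt (fun h => ∑ a, ∑ b, E h a b • Matrix.single a b (1:ℝ))
        (∑ a, ∑ b, E' a b • Matrix.single a b (1:ℝ)) 0 :=
      HasDerivAt.fun_sum fun a _ => HasDerivAt.fun_sum fun b _ => (hE a b).smul_const _
    rw [← e E'] at h1
    exact h1.congr_of_eventuallyEq (Eventually.of_forall fun h => e (E h))
  have hlO : (fun h => l 0 - l h) =O[𝓝 0] (fun h : ℝ => h) := by
    have h1 : (fun h => ∑ a, ∑ b, |E h a b|) =O[𝓝 0] (fun h : ℝ => h) := by
      refine IsBigO.fun_sum fun a _ => IsBigO.fun_sum fun b _ => ?_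
      have := (hE a b).isBigO_sub
      simp only [hE0, Matrix.zero_apply, sub_zero] at this
      exact this.abs_left
    refine (IsBigO.of_bound 1 (hl.mono fun h hh => ?_)).trans h1
    rw [one_mul, Real.norm_eq_abs]
    exact hh.trans (le_abs_self _)
  have h := main_deriv P E l A H E' d hP hA hAQ hA1 hlO hE0 hE1
  have hlin := (LinearMap.toContinuousLinearMap
    (Matrix.entryLinearMap ℝ ℝ i k)).hasFDerivAt.comp_hasDerivAt (0:ℝ) h
  exact hlin

end frob

theorem directional_derivative_of_eigenprojections {n m : ℕ}
    (Ω : Set (EuclideanSpace ℝ (Fin n))) (hΩo : IsOpen Ω) (hΩc : IsConnected Ω)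
    (H : EuclideanSpace ℝ (Fin n) → Matrix (Fin m) (Fin m) ℝ)
    (lam : Fin m → EuclideanSpace ℝ (Fin n) → ℝ)
    (P : Fin m → EuclideanSpace ℝ (Fin n) → Matrix (Fin m) (Fin m) ℝ)
    (hsymm : ∀ x ∈ Ω, (H x).IsSymm)
    (hmono : ∀ x ∈ Ω, Monotone fun i => lam i x)
    (hPsymm : ∀ (j : Fin m) (x), x ∈ Ω → (P j x).IsSymm)
    (hPidem : ∀ (j : Fin m) (x), x ∈ Ω → P j x * P j x = P j x)
    (hHP : ∀ (j : Fin m) (x), x ∈ Ω → H x * P j x = lam j x • P j x)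
    (htr : ∀ (j : Fin m) (x), x ∈ Ω →
      (P j x).trace = ((Finset.univ.filter fun i => lam i x = lam j x).card : ℝ))
    (hPeq : ∀ (i j : Fin m) (x), x ∈ Ω → lam i x = lam j x → P i x = P j x)
    (hPorth : ∀ (i j : Fin m) (x), x ∈ Ω → lam i x ≠ lam j x → P i x * P j x = 0)
    (hcompl : ∀ x ∈ Ω,
      ∑ i, ((Finset.univ.filter fun k => lam k x = lam i x).card : ℝ)⁻¹ • P i x = 1)
    (hH : ∀ i k, ContDiffOn ℝ 1 (fun y => H y i k) Ω)
    (j : Fin m) (d : ℕ)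
    (hd : ∀ x ∈ Ω, (P j x).trace = (d : ℝ)) :
    ∀ x ∈ Ω, ∀ (e : EuclideanSpace ℝ (Fin n)) (i k : Fin m),
      HasDerivAt (fun h : ℝ => P j (x + h • e) i k)
        ((P j x * DH H x e * Amat lam P j x + Amat lam P j x * DH H x e * P j x) i k) 0 := by
  intro x hx e i k
  have S : ∀ y ∈ Ω, Spec (H y) (fun i => lam i y) (fun i => P i y) := fun y hy =>
    ⟨hsymm y hy, hmono y hy, fun i => hPsymm i y hy, fun i => hPidem i y hy,
      fun i => hHP i y hy, fun i => htr i y hy, fun i j => hPeq i j y hy,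
      fun i j => hPorth i j y hy, hcompl y hy⟩
  have hAA : Amat lam P j x = Spec.A (fun i => lam i x) (fun i => P i x) j := rfl
  have hline : HasDerivAt (fun h : ℝ => x + h • e) e 0 := by
    simpa using ((hasDerivAt_id (0:ℝ)).smul_const e).const_add x
  have hmem : ∀ᶠ h in nhds (0:ℝ), x + h • e ∈ Ω :=
    hline.continuousAt.eventually_mem (hΩo.mem_nhds (by simpa using hx))
  have key := main_entry (fun h : ℝ => P j (x + h • e)) (fun h : ℝ => H (x + h • e) - H x)
    (fun h : ℝ => lam j (x + h • e)) (Amat lam P j x) (H x) (DH H x e) d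
    (hmem.mono fun h hh => ⟨hPsymm j _ hh, hPidem j _ hh, hd _ hh, by
      rw [add_sub_cancel]; exact hHP j _ hh, by
      rw [Matrix.transpose_sub, (hsymm _ hh).eq, (hsymm _ hx).eq]⟩)
    ((S x hx).A_symm j) (by simpa [hAA] using (S x hx).A_mul_P j)
    (by simpa [hAA] using (S x hx).A_mul j)
    (hmem.mono fun h hh => by
      have := (S _ hh).weyl_abs (S x hx) j
      rw [abs_sub_comm]
      simpa using this)
    (by simp)
    (fun a b => by
      have h1 : DifferentiableAt ℝ (fun y => H y a b) x :=
        ((hH a b).contDiffAt (hΩo.mem_nhds hx)).differentiableAt (by norm_num)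
      have h2 : HasFDerivAt (fun y => H y a b) (fderiv ℝ (fun y => H y a b) x)
          (x + (0:ℝ) • e) := by simpa using h1.hasFDerivAt
      exact (h2.comp_hasDerivAt (0:ℝ) hline).sub_const _) i k
  simpa using key
end

section
/- Let H : Ω → S(m) be continuously differentiable with repeated eigenvalues λ_i(x) and eigenprojections P_i(x), and let x : [a,b] → Ω be a C¹ curve. Fix j ∈ {1,…,m} and assume that the rank tr P_j(x(t)) = d_j is constant along the curve. Then the function t ↦ λ_j(x(t)) is differentiable on (a,b) with derivative (d/dt) λ_j(x(t)) = (1/d_j) · tr( P_j(x(t)) · D_{x'(t)} H(x(t)) ). -/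
open scoped Classical

open Filter Topology

structure EigSpec {m : ℕ} (A : Matrix (Fin m) (Fin m) ℝ) (l : Fin m → ℝ)
    (P : Fin m → Matrix (Fin m) (Fin m) ℝ) : Prop where
  symm : A.IsSymm
  mono : Monotone l
  psymm : ∀ j, (P j).IsSymm
  idem : ∀ j, P j * P j = P j
  hp : ∀ j, A * P j = l j • P j
  tr : ∀ j, (P j).trace = ((Finset.univ.filter fun i => l i = l j).card : ℝ)
  eq : ∀ i j, l i = l j → P i = P j
  compl : ∑ i, ((Finset.univ.filter fun k => l k = l i).card : ℝ)⁻¹ • P i = 1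

lemma comb_half {m : ℕ} (w : Fin m → Fin m → ℝ) (x y : Fin m → ℝ) (δ : ℝ)
    (hδ : 0 ≤ δ) (hw : ∀ i k, 0 ≤ w i k) (h1 : ∀ i, ∑ k, w i k = 1) (h2 : ∀ k, ∑ i, w i k = 1)
    (hx : Monotone x) (hy : Monotone y) (hb : ∀ i k, |y k - x i| * w i k ≤ δ) (j : Fin m) :
    y j - x j ≤ (m : ℝ) * m * δ := by
  by_cases hle : y j - x j ≤ 0
  · exact hle.trans (by positivity)
  push Not at hle
  have hS : (1 : ℝ) ≤ ∑ i ∈ Finset.Iic j, ∑ k ∈ Finset.Ici j, w i k := by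
    have e1 : ∑ i ∈ Finset.Iic j, ∑ k, w i k = (j : ℝ) + 1 := by
      simp [h1]
    have e2 : ∀ i, ∑ k, w i k = ∑ k ∈ Finset.Iio j, w i k + ∑ k ∈ Finset.Ici j, w i k := by
      intro i
      rw [← Finset.sum_union]
      · congr 1
        ext k; simp [lt_or_ge]
      · rw [Finset.disjoint_left]; intro k hk hk'
        simp at hk hk'
        exact absurd hk (not_lt.2 hk')
    have e3 : ∑ i ∈ Finset.Iic j, ∑ k ∈ Finset.Iio j, w i k ≤ (j : ℝ) := by
      rw [Finset.sum_comm]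
      calc _ ≤ ∑ k ∈ Finset.Iio j, (1 : ℝ) := by
            apply Finset.sum_le_sum
            intro k _
            rw [← h2 k]
            exact Finset.sum_le_sum_of_subset_of_nonneg (Finset.subset_univ _)
              (fun i _ _ => hw i k)
        _ = j := by simp
    simp only [e2, Finset.sum_add_distrib] at e1
    linarith
  calc y j - x j ≤ (y j - x j) * ∑ i ∈ Finset.Iic j, ∑ k ∈ Finset.Ici j, w i k := by nlinarith
    _ = ∑ i ∈ Finset.Iic j, ∑ k ∈ Finset.Ici j, (y j - x j) * w i k := by
        simp [Finset.mul_sum]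
    _ ≤ ∑ i ∈ Finset.Iic j, ∑ k ∈ Finset.Ici j, δ := by
        apply Finset.sum_le_sum; intro i hi
        apply Finset.sum_le_sum; intro k hk
        simp at hi hk
        refine le_trans ?_ (hb i k)
        apply mul_le_mul_of_nonneg_right _ (hw i k)
        refine le_trans ?_ (le_abs_self _)
        linarith [hx hi, hy hk]
    _ ≤ ∑ i : Fin m, ∑ k : Fin m, δ := by
        refine le_trans (Finset.sum_le_sum_of_subset_of_nonneg (Finset.subset_univ _) ?_) ?_
        · intro i _ _; exact Finset.sum_nonneg (fun _ _ => hδ)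
        · apply Finset.sum_le_sum; intro i hi
          exact Finset.sum_le_sum_of_subset_of_nonneg (Finset.subset_univ _) (fun _ _ _ => hδ)
    _ = _ := by simp [mul_assoc]

lemma comb_full {m : ℕ} (w : Fin m → Fin m → ℝ) (x y : Fin m → ℝ) (δ : ℝ)
    (hδ : 0 ≤ δ) (hw : ∀ i k, 0 ≤ w i k) (h1 : ∀ i, ∑ k, w i k = 1) (h2 : ∀ k, ∑ i, w i k = 1)
    (hx : Monotone x) (hy : Monotone y) (hb : ∀ i k, |y k - x i| * w i k ≤ δ) (j : Fin m) :
    |y j - x j| ≤ (m : ℝ) * m * δ := by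
  rw [abs_le]
  have a1 := comb_half w x y δ hδ hw h1 h2 hx hy hb j
  have a2 := comb_half (fun i k => w k i) y x δ hδ (fun i k => hw k i) h2 h1 hy hx
    (fun i k => by rw [abs_sub_comm]; exact hb k i) j
  constructor <;> linarith

lemma proj_entry {m : ℕ} {P : Matrix (Fin m) (Fin m) ℝ} (hs : P.IsSymm) (hi : P * P = P)
    (a b : Fin m) : |P a b| ≤ 1 := by
  have h : ∀ a, P a a = ∑ b, P a b ^ 2 := by
    intro a
    conv_lhs => rw [← hi]
    rw [Matrix.mul_apply]
    refine Finset.sum_congr rfl fun b _ => ?_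
    rw [sq, hs.apply]
  have h' : ∀ a b, P a b ^ 2 ≤ P a a := by
    intro a b
    rw [h a]
    exact Finset.single_le_sum (f := fun b => P a b ^ 2) (fun _ _ => sq_nonneg _)
      (Finset.mem_univ b)
  have h1 : P a a ≤ 1 := by nlinarith [h' a a]
  have h2 := (h' a b).trans h1
  exact (sq_le_one_iff_abs_le_one _).1 h2

lemma tr_nonneg {m : ℕ} {P Q : Matrix (Fin m) (Fin m) ℝ} (hs : P.IsSymm) (hi : P * P = P)
    (hs' : Q.IsSymm) (hi' : Q * Q = Q) : 0 ≤ (P * Q).trace := by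
  have : (P * Q).trace = ((P * Q).transpose * (P * Q)).trace := by
    rw [Matrix.transpose_mul, hs.eq, hs'.eq]
    calc (P * Q).trace = (P * (Q * Q)).trace := by rw [hi']
      _ = (Q * (P * Q)).trace := by rw [← mul_assoc, Matrix.trace_mul_comm]
      _ = (Q * ((P * P) * Q)).trace := by rw [hi]
      _ = _ := by simp only [mul_assoc]
  rw [this]
  simp only [Matrix.trace, Matrix.diag, Matrix.mul_apply (M := (P * Q).transpose), Matrix.transpose_apply]
  exact Finset.sum_nonneg fun i _ => Finset.sum_nonneg fun k _ => mul_self_nonneg _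

lemma tr_bound {m : ℕ} {P Q : Matrix (Fin m) (Fin m) ℝ} (D : Matrix (Fin m) (Fin m) ℝ)
    (hP : ∀ a b, |P a b| ≤ 1) (hQ : ∀ a b, |Q a b| ≤ 1) :
    |(P * D * Q).trace| ≤ ∑ a : Fin m, ∑ b : Fin m, ∑ c : Fin m, |D c b| := by
  simp only [Matrix.trace, Matrix.diag, Matrix.mul_apply, Finset.sum_mul]
  refine (Finset.abs_sum_le_sum_abs _ _).trans (Finset.sum_le_sum fun a _ => ?_)
  refine (Finset.abs_sum_le_sum_abs _ _).trans (Finset.sum_le_sum fun b _ => ?_)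
  refine (Finset.abs_sum_le_sum_abs _ _).trans (Finset.sum_le_sum fun c _ => ?_)
  rw [abs_mul, abs_mul]
  have := hP a c; have := hQ b a
  calc |P a c| * |D c b| * |Q b a| ≤ 1 * |D c b| * 1 := by gcongr
    _ = _ := by ring

/-- weights -/
noncomputable def wt {m : ℕ} (l l' : Fin m → ℝ) (P P' : Fin m → Matrix (Fin m) (Fin m) ℝ)
    (i k : Fin m) : ℝ :=
  ((Finset.univ.filter fun r => l r = l i).card : ℝ)⁻¹ *
    ((Finset.univ.filter fun r => l' r = l' k).card : ℝ)⁻¹ * (P i * P' k).trace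

lemma card_ge {m : ℕ} (l : Fin m → ℝ) (i : Fin m) :
    (1 : ℝ) ≤ ((Finset.univ.filter fun r => l r = l i).card : ℝ) := by
  have : 0 < (Finset.univ.filter fun r => l r = l i).card :=
    Finset.card_pos.2 ⟨i, by simp⟩
  exact_mod_cast this

lemma key_id {m : ℕ} {A B : Matrix (Fin m) (Fin m) ℝ} {l l' : Fin m → ℝ}
    {P P' : Fin m → Matrix (Fin m) (Fin m) ℝ} (h : EigSpec A l P) (h' : EigSpec B l' P')
    (i k : Fin m) : (P i * (B - A) * P' k).trace = (l' k - l i) * (P i * P' k).trace := by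
  have e : P i * A = l i • P i := by
    have := congrArg Matrix.transpose (h.hp i)
    rwa [Matrix.transpose_mul, Matrix.transpose_smul, h.symm.eq, (h.psymm i).eq] at this
  rw [mul_sub, sub_mul, e, mul_assoc, h'.hp k]
  simp [Matrix.trace_sub, Matrix.trace_smul, sub_mul]

lemma wt_row {m : ℕ} {A B : Matrix (Fin m) (Fin m) ℝ} {l l' : Fin m → ℝ}
    {P P' : Fin m → Matrix (Fin m) (Fin m) ℝ} (h : EigSpec A l P) (h' : EigSpec B l' P')
    (i : Fin m) : ∑ k, wt l l' P P' i k = 1 := by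
  have := congrArg (fun M => (P i * M).trace) h'.compl
  simp only [Finset.mul_sum, Matrix.trace_sum, Matrix.mul_smul, Matrix.trace_smul, mul_one,
    smul_eq_mul] at this
  simp only [wt, mul_assoc, ← Finset.mul_sum]
  rw [this, h.tr]
  exact inv_mul_cancel₀ (by have := card_ge l i; positivity)

lemma wt_comm {m : ℕ} (l l' : Fin m → ℝ) (P P' : Fin m → Matrix (Fin m) (Fin m) ℝ)
    (i k : Fin m) : wt l l' P P' i k = wt l' l P' P k i := by
  unfold wt; rw [Matrix.trace_mul_comm]; ring

lemma wt_nonneg {m : ℕ} {A B : Matrix (Fin m) (Fin m) ℝ} {l l' : Fin m → ℝ}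
    {P P' : Fin m → Matrix (Fin m) (Fin m) ℝ} (h : EigSpec A l P) (h' : EigSpec B l' P')
    (i k : Fin m) : 0 ≤ wt l l' P P' i k :=
  mul_nonneg (by positivity) (tr_nonneg (h.psymm i) (h.idem i) (h'.psymm k) (h'.idem k))

lemma wt_bound {m : ℕ} {A B : Matrix (Fin m) (Fin m) ℝ} {l l' : Fin m → ℝ}
    {P P' : Fin m → Matrix (Fin m) (Fin m) ℝ} (h : EigSpec A l P) (h' : EigSpec B l' P')
    (i k : Fin m) : |l' k - l i| * wt l l' P P' i k ≤
      ∑ a : Fin m, ∑ b : Fin m, ∑ c : Fin m, |(B - A) c b| := by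
  have t0 := tr_nonneg (h.psymm i) (h.idem i) (h'.psymm k) (h'.idem k)
  have b := tr_bound (B - A) (proj_entry (h.psymm i) (h.idem i))
    (proj_entry (h'.psymm k) (h'.idem k))
  rw [key_id h h', abs_mul, abs_of_nonneg t0] at b
  refine le_trans ?_ b
  apply mul_le_mul_of_nonneg_left _ (abs_nonneg _)
  unfold wt
  have c1 := inv_le_one_of_one_le₀ (card_ge l i)
  have c2 := inv_le_one_of_one_le₀ (card_ge l' k)
  have : ((Finset.univ.filter fun r => l r = l i).card : ℝ)⁻¹ *
    ((Finset.univ.filter fun r => l' r = l' k).card : ℝ)⁻¹ ≤ 1 :=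
    mul_le_one₀ c1 (by positivity) c2
  exact mul_le_of_le_one_left t0 this

lemma frob {m : ℕ} {P Q : Matrix (Fin m) (Fin m) ℝ} (hs : P.IsSymm) (hi : P * P = P)
    (hs' : Q.IsSymm) (hi' : Q * Q = Q) (a b : Fin m) :
    (Q a b - P a b) ^ 2 ≤ Q.trace + P.trace - 2 * (P * Q).trace := by
  have e : Q.trace + P.trace - 2 * (P * Q).trace = ((Q - P) * (Q - P).transpose).trace := by
    rw [Matrix.transpose_sub, hs.eq, hs'.eq, sub_mul, mul_sub, mul_sub, hi, hi']
    simp only [Matrix.trace_sub]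
    rw [Matrix.trace_mul_comm Q P]; ring
  rw [e]
  simp only [Matrix.trace, Matrix.diag, Matrix.mul_apply, Matrix.transpose_apply, Matrix.sub_apply,
    ← sq]
  refine le_trans ?_ (Finset.single_le_sum (f := fun a => ∑ b, (Q a b - P a b) ^ 2)
    (fun _ _ => Finset.sum_nonneg fun _ _ => sq_nonneg _) (Finset.mem_univ a))
  exact Finset.single_le_sum (f := fun b => (Q a b - P a b) ^ 2)
      (fun _ _ => sq_nonneg _) (Finset.mem_univ b)

lemma core {m : ℕ} (A : ℝ → Matrix (Fin m) (Fin m) ℝ) (l : ℝ → Fin m → ℝ)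
    (P : ℝ → Fin m → Matrix (Fin m) (Fin m) ℝ) (t : ℝ) (j : Fin m) (d : ℕ)
    (A' : Matrix (Fin m) (Fin m) ℝ)
    (hA : ∀ p q, HasDerivAt (fun s => A s p q) (A' p q) t)
    (hsp : ∀ᶠ s in 𝓝 t, EigSpec (A s) (l s) (P s))
    (hd : ∀ᶠ s in 𝓝 t, (P s j).trace = d) :
    HasDerivAt (fun s => l s j) ((d : ℝ)⁻¹ * (P t j * A').trace) t := by
  have ht := hsp.self_of_nhds
  have hdt := hd.self_of_nhds
  have hd1 : (1 : ℝ) ≤ d := by rw [← hdt, ht.tr]; exact card_ge _ _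
  have hd0 : (d : ℝ) ≠ 0 := by positivity
  set δ : ℝ → ℝ := fun s => ∑ a : Fin m, ∑ b : Fin m, ∑ c : Fin m, |(A s - A t) c b| with hδ
  have hδ0 : Tendsto δ (𝓝 t) (𝓝 0) := by
    have : Tendsto δ (𝓝 t) (𝓝 (∑ a : Fin m, ∑ b : Fin m, ∑ c : Fin m, |A t c b - A t c b|)) := by
      refine tendsto_finsetSum _ fun a _ => tendsto_finsetSum _ fun b _ =>
        tendsto_finsetSum _ fun c _ => ?_
      exact ((hA c b).continuousAt.tendsto.sub_const _).abs
    simpa using this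
  have hδnn : ∀ s, 0 ≤ δ s := fun s => Finset.sum_nonneg fun _ _ => Finset.sum_nonneg fun _ _ =>
    Finset.sum_nonneg fun _ _ => abs_nonneg _
  have hl : Tendsto (fun s => l s j) (𝓝 t) (𝓝 (l t j)) := by
    rw [tendsto_iff_norm_sub_tendsto_zero]
    refine squeeze_zero' (Eventually.of_forall fun s => norm_nonneg _) (g := fun s => (m : ℝ) * m * δ s) ?_
      (by simpa using hδ0.const_mul ((m : ℝ) * m))
    filter_upwards [hsp] with s hs
    exact comb_full (wt (l t) (l s) (P t) (P s)) (l t) (l s) (δ s) (hδnn s)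
      (wt_nonneg ht hs) (wt_row ht hs)
      (fun k => by simp only [wt_comm (l t)]; exact wt_row hs ht k) ht.mono hs.mono
      (wt_bound ht hs) j
  have hw0 : ∀ i, l t i ≠ l t j → Tendsto (fun s => wt (l t) (l s) (P t) (P s) i j) (𝓝 t) (𝓝 0) := by
    intro i hi
    have hne : |l t j - l t i| ≠ 0 := abs_ne_zero.2 (sub_ne_zero.2 hi.symm)
    have hlim : Tendsto (fun s => |l s j - l t i|) (𝓝 t) (𝓝 |l t j - l t i|) :=
      (hl.sub_const _).abs
    have hq : Tendsto (fun s => δ s / |l s j - l t i|) (𝓝 t) (𝓝 0) := by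
      have h0 := hδ0.div hlim hne
      rw [zero_div] at h0
      exact h0
    refine squeeze_zero' ?_ ?_ hq
    · filter_upwards [hsp] with s hs using wt_nonneg ht hs i j
    · filter_upwards [hsp, hlim.eventually_ne hne] with s hs hn
      rw [le_div_iff₀ (lt_of_le_of_ne (abs_nonneg _) hn.symm), mul_comm]
      exact wt_bound ht hs i j
  have hPQ : Tendsto (fun s => (P t j * P s j).trace) (𝓝 t) (𝓝 d) := by
    have hsum : Tendsto (fun s => (d : ℝ) * (1 - ∑ i ∈ Finset.univ.filter (fun i => ¬ l t i = l t j),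
        wt (l t) (l s) (P t) (P s) i j)) (𝓝 t) (𝓝 d) := by
      have := (tendsto_finsetSum (Finset.univ.filter (fun i => ¬ l t i = l t j))
        (fun i hi => hw0 i (by simpa using hi))).const_sub 1 |>.const_mul (d : ℝ)
      simpa using this
    refine hsum.congr' ?_
    filter_upwards [hsp, hd] with s hs hds
    have h1 : ∑ i, wt (l t) (l s) (P t) (P s) i j = 1 := by
      simp only [wt_comm (l t)]; exact wt_row hs ht j
    rw [← Finset.sum_filter_add_sum_filter_not Finset.univ (fun i => l t i = l t j)] at h1
    have h2 : ∑ i ∈ Finset.univ.filter (fun i => l t i = l t j), wt (l t) (l s) (P t) (P s) i j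
        = (d : ℝ)⁻¹ * (P t j * P s j).trace := by
      have c1 := ht.tr j
      rw [hdt] at c1
      have c2 := hs.tr j
      rw [hds] at c2
      rw [Finset.sum_congr rfl (g := fun _ => (d : ℝ)⁻¹ * (d : ℝ)⁻¹ * (P t j * P s j).trace)]
      · rw [Finset.sum_const, nsmul_eq_mul, ← c1]
        field_simp
      · intro i hi
        have hi : l t i = l t j := by simpa using hi
        unfold wt
        rw [hi, ← c1, ← c2, ht.eq i j hi]
    rw [h2] at h1
    rw [← h1]
    field_simp
    ring
  have hQ : ∀ p q, Tendsto (fun s => P s j p q) (𝓝 t) (𝓝 (P t j p q)) := by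
    intro p q
    rw [tendsto_iff_norm_sub_tendsto_zero]
    have hz : Tendsto (fun s => √((d : ℝ) + d - 2 * (P t j * P s j).trace)) (𝓝 t) (𝓝 0) := by
      have := ((hPQ.const_mul 2).const_sub ((d : ℝ) + d)).sqrt
      convert this using 2
      rw [two_mul]; simp
    refine squeeze_zero' (Eventually.of_forall fun s => norm_nonneg _) ?_ hz
    filter_upwards [hsp, hd] with s hs hds
    apply Real.le_sqrt_of_sq_le
    have := frob (ht.psymm j) (ht.idem j) (hs.psymm j) (hs.idem j) p q
    rw [hds, hdt] at this
    simpa using this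
  rw [hasDerivAt_iff_tendsto_slope]
  have hnum : Tendsto (fun s => (P t j * ((s - t)⁻¹ • (A s - A t)) * P s j).trace) (𝓝[≠] t)
      (𝓝 (P t j * A' * P t j).trace) := by
    simp only [Matrix.trace, Matrix.diag, Matrix.mul_apply]
    refine tendsto_finsetSum _ fun a _ => tendsto_finsetSum _ fun b _ => Tendsto.mul
      (tendsto_finsetSum _ fun c _ => Tendsto.const_mul _ ?_) ((hQ b a).mono_left nhdsWithin_le_nhds)
    have := hasDerivAt_iff_tendsto_slope.1 (hA c b)
    refine this.congr fun s => ?_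
    simp [slope_def_field, div_eq_inv_mul]
  have hfin := (hnum.div (hPQ.mono_left nhdsWithin_le_nhds) hd0)
  have e : (P t j * A' * P t j).trace / d = (d : ℝ)⁻¹ * (P t j * A').trace := by
    rw [Matrix.trace_mul_comm, ← mul_assoc, ht.idem, div_eq_inv_mul]
  rw [e] at hfin
  refine hfin.congr' ?_
  filter_upwards [nhdsWithin_le_nhds hsp, nhdsWithin_le_nhds (hPQ.eventually_ne hd0)] with s hs hn
  simp only [Pi.div_apply]
  rw [div_eq_iff hn, Matrix.mul_smul, Matrix.smul_mul, Matrix.trace_smul, key_id ht hs,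
    slope_def_field]
  simp only [smul_eq_mul]
  ring


theorem eigenvalue_differentiable_along_curve {n m : ℕ}
    (Ω : Set (EuclideanSpace ℝ (Fin n))) (hΩo : IsOpen Ω) (hΩc : IsConnected Ω)
    (H : EuclideanSpace ℝ (Fin n) → Matrix (Fin m) (Fin m) ℝ)
    (lam : Fin m → EuclideanSpace ℝ (Fin n) → ℝ)
    (P : Fin m → EuclideanSpace ℝ (Fin n) → Matrix (Fin m) (Fin m) ℝ)
    (hsymm : ∀ x ∈ Ω, (H x).IsSymm)
    (hmono : ∀ x ∈ Ω, Monotone fun i => lam i x)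
    (hPsymm : ∀ (j : Fin m) (x), x ∈ Ω → (P j x).IsSymm)
    (hPidem : ∀ (j : Fin m) (x), x ∈ Ω → P j x * P j x = P j x)
    (hHP : ∀ (j : Fin m) (x), x ∈ Ω → H x * P j x = lam j x • P j x)
    (htr : ∀ (j : Fin m) (x), x ∈ Ω →
      (P j x).trace = ((Finset.univ.filter fun i => lam i x = lam j x).card : ℝ))
    (hPeq : ∀ (i j : Fin m) (x), x ∈ Ω → lam i x = lam j x → P i x = P j x)
    (hPorth : ∀ (i j : Fin m) (x), x ∈ Ω → lam i x ≠ lam j x → P i x * P j x = 0)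
    (hcompl : ∀ x ∈ Ω,
      ∑ i, ((Finset.univ.filter fun k => lam k x = lam i x).card : ℝ)⁻¹ • P i x = 1)
    (hH : ∀ i k, ContDiffOn ℝ 1 (fun y => H y i k) Ω)
    (j : Fin m) (a b : ℝ) (hab : a < b)
    (c : ℝ → EuclideanSpace ℝ (Fin n)) (c' : ℝ → EuclideanSpace ℝ (Fin n))
    (hc : ContDiffOn ℝ 1 c (Set.Icc a b))
    (hc' : ∀ t ∈ Set.Icc a b, HasDerivWithinAt c (c' t) (Set.Icc a b) t)
    (hmem : ∀ t ∈ Set.Icc a b, c t ∈ Ω)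
    (d : ℕ) (hd : ∀ t ∈ Set.Icc a b, (P j (c t)).trace = (d : ℝ)) :
    ∀ t ∈ Set.Ioo a b,
      HasDerivAt (fun s => lam j (c s))
        ((d : ℝ)⁻¹ * (P j (c t) * DH H (c t) (c' t)).trace) t := by
  intro t ht
  have hIcc : Set.Icc a b ∈ 𝓝 t := Icc_mem_nhds ht.1 ht.2
  have htm := Set.Ioo_subset_Icc_self ht
  have hcd : HasDerivAt c (c' t) t := (hc' t htm).hasDerivAt hIcc
  refine core (fun s => H (c s)) (fun s i => lam i (c s)) (fun s i => P i (c s)) t j d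
    (DH H (c t) (c' t)) ?_ ?_ ?_
  · intro p q
    have hdiff : DifferentiableAt ℝ (fun y => H y p q) (c t) :=
      ((hH p q).differentiableOn (by norm_num)).differentiableAt (hΩo.mem_nhds (hmem t htm))
    exact hdiff.hasFDerivAt.comp_hasDerivAt t hcd
  · filter_upwards [hIcc] with s hs
    have hm := hmem s hs
    exact ⟨hsymm _ hm, hmono _ hm, fun j => hPsymm j _ hm, fun j => hPidem j _ hm,
      fun j => hHP j _ hm, fun j => htr j _ hm, fun i j => hPeq i j _ hm, hcompl _ hm⟩
  · filter_upwards [hIcc] with s hs using hd s hs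
end

section
/- Let H : Ω → S(m) be continuously differentiable with repeated eigenvalues λ_i(x) and eigenprojections P_i(x), and fix j ∈ {1,…,m}. The following conditions are equivalent: (a) λ_j is continuously differentiable in Ω and tr P_j is constant in Ω; (b) λ_j is differentiable in Ω and tr P_j is constant in Ω; (c) P_j is differentiable in Ω; (d) P_j is continuous in Ω. -/
open scoped Classical

section Helpers
open Matrix
open scoped Ring

lemma aux_rank_eq_trace {m : ℕ} (P : Matrix (Fin m) (Fin m) ℝ) (h : P * P = P) :
    P.trace = (P.rank : ℝ) := by
  have h1 : IsIdempotentElem (Matrix.toLin' P) := by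
    unfold IsIdempotentElem
    rw [Module.End.mul_eq_comp, ← Matrix.toLin'_mul, h]
  have h2 := (LinearMap.IsIdempotentElem.isProj_range _ h1).trace
  rw [Matrix.trace_toLin'_eq] at h2
  rw [h2]
  rfl

lemma aux_proj_mul {m : ℕ} (P P0 W : Matrix (Fin m) (Fin m) ℝ) (h : P * P = P)
    (h0 : P0 * P0 = P0) (ht : P.trace = P0.trace) (hW : IsUnit W) (hP : P = W * P0 * P) :
    P * (W * P0) = W * P0 := by
  have hr : P.rank = (W * P0).rank := by
    rw [Matrix.rank_mul_eq_right_of_isUnit_det W P0 ((Matrix.isUnit_iff_isUnit_det W).1 hW)]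
    rw [aux_rank_eq_trace P h, aux_rank_eq_trace P0 h0] at ht
    exact_mod_cast ht
  have hle : LinearMap.range P.mulVecLin ≤ LinearMap.range (W * P0).mulVecLin := by
    rintro _ ⟨v, rfl⟩
    refine ⟨P *ᵥ v, ?_⟩
    simp only [Matrix.mulVecLin_apply, Matrix.mulVec_mulVec]
    rw [← hP]
  have heq := Submodule.eq_of_le_of_finrank_eq hle hr
  apply Matrix.ext_of_mulVec_single
  intro i
  have : (W * P0) *ᵥ (Pi.single i 1) ∈ LinearMap.range P.mulVecLin := by
    rw [heq]; exact ⟨_, rfl⟩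
  obtain ⟨u, hu⟩ := this
  rw [← Matrix.mulVec_mulVec, ← hu]
  simp only [Matrix.mulVecLin_apply, Matrix.mulVec_mulVec, h]

lemma aux_formula {m : ℕ} (P P0 A0 B0 B : Matrix (Fin m) (Fin m) ℝ)
    (hs : Pᵀ = P) (hs0 : P0ᵀ = P0) (h : P * P = P) (h0 : P0 * P0 = P0)
    (ht : P.trace = P0.trace) (hA : A0 * B0 = 1 - P0) (hB : B * P = 0)
    (hC : IsUnit (1 + A0 * (B - B0)))
    (hD : IsUnit (((1 + A0 * (B - B0))⁻¹ʳ * P0)ᵀ * ((1 + A0 * (B - B0))⁻¹ʳ * P0) + 1 - P0)) :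
    P = (1 + A0 * (B - B0))⁻¹ʳ * P0 *
      (((1 + A0 * (B - B0))⁻¹ʳ * P0)ᵀ * ((1 + A0 * (B - B0))⁻¹ʳ * P0) + 1 - P0)⁻¹ʳ *
      ((1 + A0 * (B - B0))⁻¹ʳ)ᵀ := by
  have hCP : (1 + A0 * (B - B0)) * P = P0 * P := by
    have : (1 + A0 * (B - B0)) * P = P + A0 * (B * P) - A0 * B0 * P := by noncomm_ring
    rw [this, hB, hA]; noncomm_ring
  generalize hCdef : (1 + A0 * (B - B0)) = C at *
  have hCW : C * C⁻¹ʳ = 1 := Ring.mul_inverse_cancel C hC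
  have hWC : C⁻¹ʳ * C = 1 := Ring.inverse_mul_cancel C hC
  generalize C⁻¹ʳ = W at *
  have hWu : IsUnit W := ⟨⟨W, C, hWC, hCW⟩, rfl⟩
  have hP : P = W * P0 * P := by
    rw [mul_assoc, ← hCP, ← mul_assoc, hWC, one_mul]
  have hP' : P = P * P0 * Wᵀ := by
    have := congrArg Matrix.transpose hP
    simpa [Matrix.transpose_mul, hs, hs0, mul_assoc] using this
  have hPV := aux_proj_mul P P0 W h h0 ht hWu hP
  have hX : P0 * P * P0 * ((W * P0)ᵀ * (W * P0) + 1 - P0) = P0 := by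
    have e1 : P0 * P * P0 * ((W * P0)ᵀ * (W * P0) + 1 - P0)
        = P0 * (P * (P0 * P0) * Wᵀ) * (W * P0) + P0 * P * P0 - P0 * P * (P0 * P0) := by
      rw [Matrix.transpose_mul, hs0]; noncomm_ring
    rw [e1, h0, ← hP', ← hCP, add_sub_cancel_right, mul_assoc, hPV, ← mul_assoc, hCW, one_mul]
  have hDD := Ring.mul_inverse_cancel _ hD
  generalize ((W * P0)ᵀ * (W * P0) + 1 - P0) = D at *
  have hX2 : P0 * P * P0 = P0 * D⁻¹ʳ := by
    have := congrArg (fun Z => Z * D⁻¹ʳ) hX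
    simpa only [mul_assoc, hDD, mul_one] using this
  calc P = W * P0 * P := hP
    _ = W * P0 * (P * P0 * Wᵀ) := by rw [← hP']
    _ = W * (P0 * P * P0) * Wᵀ := by noncomm_ring
    _ = _ := by rw [hX2]; noncomm_ring

open scoped Matrix.Norms.Operator in
lemma aux_diff_mat {E : Type*} [NormedAddCommGroup E] [NormedSpace ℝ E] {m : ℕ}
    (M : E → Matrix (Fin m) (Fin m) ℝ) (x : E) :
    DifferentiableAt ℝ M x ↔ ∀ i k, DifferentiableAt ℝ (fun y => M y i k) x := by
  constructor
  · intro h i k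
    exact ((LinearMap.toContinuousLinearMap
      (Matrix.entryLinearMap ℝ ℝ i k)).differentiableAt.comp x h)
  · intro h
    have : M = fun y => ∑ i, ∑ k, (M y i k) • Matrix.single i k (1 : ℝ) := by
      funext y
      conv_lhs => rw [Matrix.matrix_eq_sum_single (M y)]
      simp [Matrix.smul_single]
    rw [this]
    refine DifferentiableAt.fun_sum fun i _ => DifferentiableAt.fun_sum fun k _ => ?_
    exact (h i k).smul_const _

open scoped Matrix.Norms.Operator in
lemma aux_diff_transpose {E : Type*} [NormedAddCommGroup E] [NormedSpace ℝ E] {m : ℕ}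
    (M : E → Matrix (Fin m) (Fin m) ℝ) (x : E) (h : DifferentiableAt ℝ M x) :
    DifferentiableAt ℝ (fun y => (M y)ᵀ) x := by
  rw [aux_diff_mat] at h ⊢
  intro i k
  exact h k i

open scoped Matrix.Norms.Operator in
lemma aux_diff {E : Type*} [NormedAddCommGroup E] [NormedSpace ℝ E] {m : ℕ}
    (P B : E → Matrix (Fin m) (Fin m) ℝ) (A0 : Matrix (Fin m) (Fin m) ℝ) (x : E)
    (U : Set E) (hU : U ∈ nhds x)
    (hs : ∀ y ∈ U, (P y)ᵀ = P y) (hi : ∀ y ∈ U, P y * P y = P y)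
    (ht : ∀ y ∈ U, (P y).trace = (P x).trace)
    (hA : A0 * B x = 1 - P x) (hB : ∀ y ∈ U, B y * P y = 0)
    (hd : ∀ i k, DifferentiableAt ℝ (fun y => B y i k) x) :
    ∀ i k, DifferentiableAt ℝ (fun y => P y i k) x := by
  rw [← aux_diff_mat] at hd ⊢
  have : CompleteSpace (Matrix (Fin m) (Fin m) ℝ) := FiniteDimensional.complete ℝ _
  have hx := mem_of_mem_nhds hU
  have dC : DifferentiableAt ℝ (fun y => 1 + A0 * (B y - B x)) x :=
    ((hd.sub_const _).const_mul A0).const_add 1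
  have uC : IsUnit ((fun y => 1 + A0 * (B y - B x)) x) := by simp
  have dW := dC.inverse uC
  have dV := dW.mul_const (P x)
  have dVt := aux_diff_transpose _ _ dV
  have dWt := aux_diff_transpose _ _ dW
  have dD := ((dVt.mul dV).add_const 1).sub_const (P x)
  have uD : IsUnit (((1 + A0 * (B x - B x))⁻¹ʳ * P x)ᵀ * ((1 + A0 * (B x - B x))⁻¹ʳ * P x)
      + 1 - P x) := by
    simp [hs x hx, hi x hx]
  have dF := (dV.mul (dD.inverse uD)).mul dWt
  refine dF.congr_of_eventuallyEq ?_
  have e1 := dC.continuousAt.eventually (Units.isOpen.mem_nhds uC)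
  have e2 := dD.continuousAt.eventually (Units.isOpen.mem_nhds uD)
  filter_upwards [hU, e1, e2] with y hy h1 h2
  exact aux_formula (P y) (P x) A0 (B x) (B y) (hs y hy) (hs x hx) (hi y hy) (hi x hx)
    (ht y hy) hA (hB y hy) h1 h2

lemma aux_mul_deriv {E : Type*} [NormedAddCommGroup E] [NormedSpace ℝ E]
    (g k : E → ℝ) (g' : E →L[ℝ] ℝ) (x : E) (hg : HasFDerivAt g g' x)
    (hk : ContinuousAt k x) :
    HasFDerivAt (fun y => (g y - g x) * k y) (k x • g') x := by
  have h1 : HasFDerivAt (fun y => (g y - g x) * k x) (k x • g') x :=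
    (hg.sub_const (g x)).mul_const (k x)
  have h2 : HasFDerivAt (fun y => (g y - g x) * (k y - k x)) (0 : E →L[ℝ] ℝ) x := by
    rw [hasFDerivAt_iff_isLittleO]
    have hO := hg.isBigO_sub
    have ho : (fun y => k y - k x) =o[nhds x] (fun _ => (1 : ℝ)) := by
      rw [Asymptotics.isLittleO_one_iff]
      simpa using hk.tendsto.sub_const (k x)
    have := (hO.norm_right).mul_isLittleO ho
    simp only [mul_one] at this
    simpa using this.norm_right
  have h3 := h1.add h2
  rw [add_zero] at h3
  refine h3.congr_of_eventuallyEq (Filter.Eventually.of_forall fun y => ?_)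
  simp only [Pi.add_apply]
  ring

lemma aux_lam_deriv {E : Type*} [NormedAddCommGroup E] [NormedSpace ℝ E] {m : ℕ}
    (H P : E → Matrix (Fin m) (Fin m) ℝ) (lam : E → ℝ) (x : E)
    (U : Set E) (hU : U ∈ nhds x)
    (hHP : ∀ y ∈ U, H y * P y = lam y • P y)
    (hPH : P x * H x = lam x • P x)
    (hi : P x * P x = P x) (ht : (P x).trace ≠ 0)
    (hd : ∀ i k, DifferentiableAt ℝ (fun y => H y i k) x)
    (hc : ∀ i k, ContinuousAt (fun y => P y i k) x) :
    HasFDerivAt lam (∑ i, ∑ k, (P x k i / (P x).trace) • fderiv ℝ (fun y => H y i k) x) x := by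
  have hc' : ContinuousAt P x := continuousAt_pi.2 fun i => continuousAt_pi.2 fun k => hc i k
  have hcM : ContinuousAt (fun y => P y * P x) x := by
    exact (Continuous.matrix_mul continuous_id continuous_const).continuousAt.comp hc'
  have hct : ContinuousAt (fun y => (P y * P x).trace) x :=
    (Continuous.matrix_trace continuous_id).continuousAt.comp hcM
  have hne : (P x * P x).trace ≠ 0 := by rwa [hi]
  have key : ∀ i k, HasFDerivAt
      (fun y => (H y i k - H x i k) * ((P y * P x) k i / (P y * P x).trace))
      ((P x k i / (P x).trace) • fderiv ℝ (fun y => H y i k) x) x := by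
    intro i k
    have hK : ContinuousAt (fun y => (P y * P x) k i / (P y * P x).trace) x := by
      refine ContinuousAt.div ?_ hct hne
      exact ((continuous_apply i).comp (continuous_apply k)).continuousAt.comp hcM
    have := aux_mul_deriv (fun y => H y i k) _ _ x (hd i k).hasFDerivAt hK
    simpa only [hi] using this
  have hsum := (HasFDerivAt.fun_sum (u := Finset.univ) fun i _ =>
    HasFDerivAt.fun_sum (u := Finset.univ) fun k _ => key i k).const_add (lam x)
  refine hsum.congr_of_eventuallyEq ?_
  filter_upwards [hU, hct.eventually_ne hne] with y hy hny
  have e : ((H y - H x) * (P y * P x)).trace = (lam y - lam x) * (P y * P x).trace := by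
    rw [sub_mul, ← mul_assoc, hHP y hy, Matrix.trace_sub, Matrix.trace_mul_comm (H x),
      mul_assoc (P y), hPH]
    simp [sub_mul]
  have e2 : ∑ i, ∑ k, (H y i k - H x i k) * ((P y * P x) k i / (P y * P x).trace)
      = ((H y - H x) * (P y * P x)).trace / (P y * P x).trace := by
    conv_rhs => rw [Matrix.trace]
    simp only [Matrix.diag_apply, Matrix.mul_apply (M := H y - H x), Matrix.sub_apply,
      Finset.sum_div, mul_div_assoc]
  rw [e2, e]
  field_simp
  ring

end Helpers

theorem eigenprojection_regularity_equivalences {n m : ℕ}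
    (Ω : Set (EuclideanSpace ℝ (Fin n))) (hΩo : IsOpen Ω) (hΩc : IsConnected Ω)
    (H : EuclideanSpace ℝ (Fin n) → Matrix (Fin m) (Fin m) ℝ)
    (lam : Fin m → EuclideanSpace ℝ (Fin n) → ℝ)
    (P : Fin m → EuclideanSpace ℝ (Fin n) → Matrix (Fin m) (Fin m) ℝ)
    (hsymm : ∀ x ∈ Ω, (H x).IsSymm)
    (hmono : ∀ x ∈ Ω, Monotone fun i => lam i x)
    (hPsymm : ∀ (j : Fin m) (x), x ∈ Ω → (P j x).IsSymm)
    (hPidem : ∀ (j : Fin m) (x), x ∈ Ω → P j x * P j x = P j x)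
    (hHP : ∀ (j : Fin m) (x), x ∈ Ω → H x * P j x = lam j x • P j x)
    (htr : ∀ (j : Fin m) (x), x ∈ Ω →
      (P j x).trace = ((Finset.univ.filter fun i => lam i x = lam j x).card : ℝ))
    (hPeq : ∀ (i j : Fin m) (x), x ∈ Ω → lam i x = lam j x → P i x = P j x)
    (hPorth : ∀ (i j : Fin m) (x), x ∈ Ω → lam i x ≠ lam j x → P i x * P j x = 0)
    (hcompl : ∀ x ∈ Ω,
      ∑ i, ((Finset.univ.filter fun k => lam k x = lam i x).card : ℝ)⁻¹ • P i x = 1)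
    (hH : ∀ i k, ContDiffOn ℝ 1 (fun y => H y i k) Ω)
    (j : Fin m) :
    List.TFAE
      [ ContDiffOn ℝ 1 (lam j) Ω ∧ ∃ c : ℝ, ∀ x ∈ Ω, (P j x).trace = c,
        (∀ x ∈ Ω, DifferentiableAt ℝ (lam j) x) ∧ ∃ c : ℝ, ∀ x ∈ Ω, (P j x).trace = c,
        ∀ (i k : Fin m), ∀ x ∈ Ω, DifferentiableAt ℝ (fun y => P j y i k) x,
        ∀ (i k : Fin m), ContinuousOn (fun y => P j y i k) Ω ] := by
  have hPH : ∀ (i : Fin m) (x), x ∈ Ω → P i x * H x = lam i x • P i x := by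
    intro i x hx
    have := congrArg Matrix.transpose (hHP i x hx)
    rwa [Matrix.transpose_mul, Matrix.transpose_smul, (hsymm x hx).eq, (hPsymm i x hx).eq] at this
  have hcard : ∀ (i : Fin m) (x : EuclideanSpace ℝ (Fin n)),
      ((Finset.univ.filter fun k => lam k x = lam i x).card : ℝ) ≠ 0 := by
    intro i x
    have : i ∈ (Finset.univ.filter fun k => lam k x = lam i x) := by simp
    exact_mod_cast (Finset.card_pos.2 ⟨i, this⟩).ne'
  have hdH : ∀ i k, ∀ x ∈ Ω, DifferentiableAt ℝ (fun y => H y i k) x := fun i k x hx =>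
    ((hH i k).contDiffAt (hΩo.mem_nhds hx)).differentiableAt (by norm_num)
  tfae_have 1 → 2 := by
    rintro ⟨h1, h2⟩
    exact ⟨fun x hx => (h1.contDiffAt (hΩo.mem_nhds hx)).differentiableAt (by norm_num), h2⟩
  tfae_have 2 → 3 := by
    rintro ⟨h1, c, hc⟩ i k x hx
    refine aux_diff (P j) (fun y => H y - lam j y • (1 : Matrix (Fin m) (Fin m) ℝ))
      (-Amat lam P j x) x Ω (hΩo.mem_nhds hx) (fun y hy => (hPsymm j y hy).eq)
      (fun y hy => hPidem j y hy) (fun y hy => by rw [hc y hy, hc x hx]) ?_ ?_ ?_ i k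
    · have e1 : ∀ i, lam i x ≠ lam j x →
          (((Finset.univ.filter fun k => lam k x = lam i x).card : ℝ) *
            (lam j x - lam i x))⁻¹ • P i x * (H x - lam j x • (1 : Matrix (Fin m) (Fin m) ℝ))
          = -(((Finset.univ.filter fun k => lam k x = lam i x).card : ℝ)⁻¹ • P i x) := by
        intro i hi
        have hne : lam j x - lam i x ≠ 0 := sub_ne_zero.2 (Ne.symm hi)
        rw [smul_mul_assoc, mul_sub (P i x), hPH i x hx, mul_smul_comm, mul_one, ← sub_smul, smul_smul,
          ← neg_smul]
        congr 1
        have := hcard i x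
        field_simp
        ring
      have e2 : ∑ i ∈ Finset.univ.filter (fun i => lam i x = lam j x),
          ((Finset.univ.filter fun k => lam k x = lam i x).card : ℝ)⁻¹ • P i x = P j x := by
        have : ∀ i ∈ Finset.univ.filter (fun i => lam i x = lam j x),
            ((Finset.univ.filter fun k => lam k x = lam i x).card : ℝ)⁻¹ • P i x
            = ((Finset.univ.filter fun k => lam k x = lam j x).card : ℝ)⁻¹ • P j x := by
          intro i hi
          have hi' := (Finset.mem_filter.1 hi).2
          rw [hPeq i j x hx hi', hi']
        rw [Finset.sum_congr rfl this, Finset.sum_const, ← Nat.cast_smul_eq_nsmul ℝ, smul_smul,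
          mul_inv_cancel₀ (hcard j x), one_smul]
      have e3 := Finset.sum_filter_add_sum_filter_not Finset.univ (fun i => lam i x = lam j x)
        (fun i => ((Finset.univ.filter fun k => lam k x = lam i x).card : ℝ)⁻¹ • P i x)
      rw [hcompl x hx, e2] at e3
      have e4 := eq_sub_of_add_eq' e3
      rw [← e4, Amat, neg_mul, Finset.sum_mul,
        Finset.sum_congr rfl (fun i hi => e1 i (Finset.mem_filter.1 hi).2), Finset.sum_neg_distrib,
        neg_neg]
    · intro y hy
      simp only [sub_mul, hHP j y hy, smul_mul_assoc, one_mul, sub_self]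
    · intro i k
      simp only [Matrix.sub_apply, Matrix.smul_apply, smul_eq_mul]
      exact (hdH i k x hx).sub ((h1 x hx).mul_const _)
  tfae_have 3 → 4 := fun h i k x hx => (h i k x hx).continuousAt.continuousWithinAt
  tfae_have 4 → 1 := by
    intro h
    have htc : ContinuousOn (fun x => (P j x).trace) Ω := by
      simp only [Matrix.trace, Matrix.diag_apply]
      exact continuousOn_finsetSum _ fun i _ => h i i
    constructor
    · have hne : ∀ x ∈ Ω, (P j x).trace ≠ 0 := fun x hx => by
        rw [htr j x hx]; exact hcard j x
      have hder : ∀ x ∈ Ω, HasFDerivAt (lam j) (∑ i, ∑ k,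
          (P j x k i / (P j x).trace) • fderiv ℝ (fun y => H y i k) x) x := fun x hx =>
        aux_lam_deriv H (P j) (lam j) x Ω (hΩo.mem_nhds hx) (fun y hy => hHP j y hy)
          (hPH j x hx) (hPidem j x hx) (hne x hx) (fun i k => hdH i k x hx)
          (fun i k => (h i k).continuousAt (hΩo.mem_nhds hx))
      have h01 : (1 : WithTop ℕ∞) = 0 + 1 := by simp
      rw [h01, contDiffOn_succ_iff_hasFDerivWithinAt_of_uniqueDiffOn hΩo.uniqueDiffOn]
      refine ⟨by simp, _, ?_, fun x hx => (hder x hx).hasFDerivWithinAt⟩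
      rw [contDiffOn_zero]
      refine continuousOn_finsetSum _ fun i _ => continuousOn_finsetSum _ fun k _ => ?_
      exact ((h k i).div htc hne).smul
        ((hH i k).continuousOn_fderiv_of_isOpen hΩo le_rfl)
    · obtain ⟨x0, hx0⟩ := hΩc.nonempty
      refine ⟨(P j x0).trace, fun x hx => ?_⟩
      have hfin : (Set.range fun k : Fin (m + 1) => ((k : ℕ) : ℝ)).Finite := Set.finite_range _
      refine hΩc.isPreconnected.constant_of_mapsTo hfin.isDiscrete htc ?_ hx hx0
      intro y hy
      refine ⟨⟨(Finset.univ.filter fun i => lam i y = lam j y).card, ?_⟩, (htr j y hy).symm⟩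
      have := Finset.card_le_univ (Finset.univ.filter fun i => lam i y = lam j y)
      rw [Fintype.card_fin] at this
      omega
  tfae_finish
end

section
/- Let X be a real symmetric m×m matrix with repeated eigenvalues λ_1 ≤ … ≤ λ_m and corresponding eigenprojections P_1, …, P_m of ranks d_i = tr P_i, so that X = Σ_{i=1}^m (λ_i/d_i) P_i. For j ∈ {1,…,m}, define j* := max{ i : λ_i = λ_j } and ℓ_k := Σ_{i=1}^k λ_i. Then the set Ξ_{j*} := { R : R symmetric, R² = R, tr R = j*, tr(RX) = ℓ_{j*} } is a singleton; namely Ξ_{j*} = { Σ_{i=1}^{j*} P_i / d_i }. -/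
open scoped Classical

theorem aux_tr {m : ℕ} (A B : Matrix (Fin m) (Fin m) ℝ) (hA : A.IsSymm) (hB : B.IsSymm)
    (hA2 : A * A = A) (hB2 : B * B = B) :
    0 ≤ (A * B).trace ∧ ((A * B).trace = 0 → A * B = 0) := by
  have h : (A * B).trace = ((A * B).conjTranspose * (A * B)).trace := by
    rw [Matrix.conjTranspose_eq_transpose_of_trivial, Matrix.transpose_mul, hA.eq, hB.eq,
      Matrix.mul_assoc, ← Matrix.mul_assoc A A B, hA2, Matrix.trace_mul_comm B, Matrix.mul_assoc,
      hB2]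
  constructor
  · rw [h]
    exact (Matrix.posSemidef_conjTranspose_mul_self (A * B)).trace_nonneg
  · intro h0
    rw [h] at h0
    exact Matrix.trace_conjTranspose_mul_self_eq_zero_iff.1 h0

theorem kyfan_minimizer_singleton {m : ℕ}
    (X : Matrix (Fin m) (Fin m) ℝ)
    (lam : Fin m → ℝ)
    (P : Fin m → Matrix (Fin m) (Fin m) ℝ)
    (hX : X.IsSymm)
    (hmono : Monotone lam)
    (hPsymm : ∀ i, (P i).IsSymm)
    (hPidem : ∀ i, P i * P i = P i)
    (hXP : ∀ i, X * P i = lam i • P i)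
    (htr : ∀ i, (P i).trace = ((Finset.univ.filter fun k => lam k = lam i).card : ℝ))
    (hPeq : ∀ i k, lam i = lam k → P i = P k)
    (hPorth : ∀ i k, lam i ≠ lam k → P i * P k = 0)
    (hcompl : ∑ i, ((Finset.univ.filter fun k => lam k = lam i).card : ℝ)⁻¹ • P i = 1)
    (j jstar : Fin m)
    (hjs : lam jstar = lam j ∧ ∀ i, lam i = lam j → i ≤ jstar) :
    {R : Matrix (Fin m) (Fin m) ℝ | R.IsSymm ∧ R * R = R ∧
        R.trace = (((jstar : ℕ) : ℝ) + 1) ∧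
        (R * X).trace = ∑ i ∈ Finset.Iic jstar, lam i}
      = {∑ i ∈ Finset.Iic jstar,
          ((Finset.univ.filter fun k => lam k = lam i).card : ℝ)⁻¹ • P i} := by
  have hdpos : ∀ i, 0 < ((Finset.univ.filter fun k => lam k = lam i).card : ℝ) := by
    intro i
    have : 0 < (Finset.univ.filter fun k => lam k = lam i).card :=
      Finset.card_pos.2 ⟨i, by simp⟩
    exact_mod_cast this
  generalize hc : (fun i => ((Finset.univ.filter fun k => lam k = lam i).card : ℝ)⁻¹) = c
  have hc' : ∀ i, ((Finset.univ.filter fun k => lam k = lam i).card : ℝ)⁻¹ = c i := fun i => by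
    rw [← hc]
  have hcpos : ∀ i, 0 < c i := fun i => by rw [← hc']; exact inv_pos.2 (hdpos i)
  have hctr : ∀ i, c i * (P i).trace = 1 := fun i => by
    rw [← hc', htr]; exact inv_mul_cancel₀ (hdpos i).ne'
  simp only [hc'] at hcompl ⊢
  have hgt : ∀ i, jstar < i → lam jstar < lam i := by
    intro i hi
    refine lt_of_le_of_ne (hmono hi.le) fun h => ?_
    exact absurd (hjs.2 i (h.symm.trans hjs.1)) (not_le.2 hi)
  have hsplit : ∀ {M : Type} [AddCommMonoid M] (f : Fin m → M),
      ∑ i, f i = ∑ i ∈ Finset.Iic jstar, f i + ∑ i ∈ Finset.Ioi jstar, f i := by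
    intro M _ f
    rw [← Finset.sum_union]
    · congr 1
      ext i
      simp [le_or_gt]
    · rw [Finset.disjoint_left]
      intro i h1 h2
      simp at h1 h2
      exact absurd h1 (not_le.2 h2)
  have hcard : ∑ i ∈ Finset.Iic jstar, (1:ℝ) = (jstar : ℕ) + 1 := by simp
  set S := ∑ i ∈ Finset.Iic jstar, c i • P i with hS
  set T := ∑ i ∈ Finset.Ioi jstar, c i • P i with hT
  have hST : S + T = 1 := by rw [← hcompl, hsplit]
  have htrS : S.trace = (jstar : ℕ) + 1 := by
    rw [hS, Matrix.trace_sum, ← hcard]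
    refine Finset.sum_congr rfl fun i _ => ?_
    rw [Matrix.trace_smul, smul_eq_mul, hctr]
  have hRX : ∀ R : Matrix (Fin m) (Fin m) ℝ,
      (R * X).trace = ∑ i, lam i * (c i * (R * P i).trace) := by
    intro R
    have : X = ∑ i, (lam i * c i) • P i := by
      calc X = X * 1 := by simp
        _ = _ := by
          rw [← hcompl, Finset.mul_sum]
          refine Finset.sum_congr rfl fun i _ => ?_
          rw [Matrix.mul_smul, hXP, smul_smul, mul_comm]
    conv_lhs => rw [this]
    rw [Finset.mul_sum, Matrix.trace_sum]
    refine Finset.sum_congr rfl fun i _ => ?_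
    rw [Matrix.mul_smul, Matrix.trace_smul, smul_eq_mul, mul_assoc]
  ext R
  simp only [Set.mem_setOf_eq, Set.mem_singleton_iff]
  constructor
  · rintro ⟨h1, h2, h3, h4⟩
    have h1' : (1 - R).IsSymm := by
      rw [Matrix.IsSymm, Matrix.transpose_sub, h1.eq, Matrix.transpose_one]
    have h2' : (1 - R) * (1 - R) = 1 - R := by
      rw [Matrix.mul_sub, Matrix.sub_mul, Matrix.sub_mul, h2]; simp
    have hr0 : ∀ i, 0 ≤ c i * (R * P i).trace := fun i =>
      mul_nonneg (hcpos i).le (aux_tr R (P i) h1 (hPsymm i) h2 (hPidem i)).1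
    have hr1e : ∀ i, 1 - c i * (R * P i).trace = c i * ((1 - R) * P i).trace := fun i => by
      rw [Matrix.sub_mul, Matrix.trace_sub, mul_sub, Matrix.one_mul, hctr]
    have hr1 : ∀ i, 0 ≤ 1 - c i * (R * P i).trace := fun i => by
      rw [hr1e]
      exact mul_nonneg (hcpos i).le (aux_tr _ (P i) h1' (hPsymm i) h2' (hPidem i)).1
    have hsum : ∑ i, c i * (R * P i).trace = (jstar : ℕ) + 1 := by
      rw [← h3]
      conv_rhs => rw [← Matrix.mul_one R, ← hcompl, Finset.mul_sum, Matrix.trace_sum]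
      refine Finset.sum_congr rfl fun i _ => ?_
      rw [Matrix.mul_smul, Matrix.trace_smul, smul_eq_mul]
    rw [hRX] at h4
    have hR0 : ∀ i, c i * (R * P i).trace = 0 → R * P i = 0 := fun i h =>
      (aux_tr R (P i) h1 (hPsymm i) h2 (hPidem i)).2
        ((mul_eq_zero.1 h).resolve_left (hcpos i).ne')
    have hR1 : ∀ i, 1 - c i * (R * P i).trace = 0 → (1 - R) * P i = 0 := fun i h =>
      (aux_tr _ (P i) h1' (hPsymm i) h2' (hPidem i)).2
        ((mul_eq_zero.1 ((hr1e i).symm.trans h)).resolve_left (hcpos i).ne')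
    generalize hr : (fun i => c i * (R * P i).trace) = r at *
    have hr' : ∀ i, c i * (R * P i).trace = r i := fun i => by rw [← hr]
    simp only [hr'] at *
    rw [hsplit] at h4 hsum
    have key : ∑ i ∈ Finset.Iic jstar, (lam jstar - lam i) * (1 - r i)
        + ∑ i ∈ Finset.Ioi jstar, (lam i - lam jstar) * r i = 0 := by
      have e1 : ∑ i ∈ Finset.Iic jstar, (lam jstar - lam i) * (1 - r i)
          = lam jstar * ∑ i ∈ Finset.Iic jstar, (1:ℝ) - ∑ i ∈ Finset.Iic jstar, lam i
            - lam jstar * ∑ i ∈ Finset.Iic jstar, r i + ∑ i ∈ Finset.Iic jstar, lam i * r i := by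
        rw [Finset.mul_sum, Finset.mul_sum, ← Finset.sum_sub_distrib, ← Finset.sum_sub_distrib,
          ← Finset.sum_add_distrib]
        exact Finset.sum_congr rfl fun i _ => by ring
      have e2 : ∑ i ∈ Finset.Ioi jstar, (lam i - lam jstar) * r i
          = ∑ i ∈ Finset.Ioi jstar, lam i * r i - lam jstar * ∑ i ∈ Finset.Ioi jstar, r i := by
        rw [Finset.mul_sum, ← Finset.sum_sub_distrib]
        exact Finset.sum_congr rfl fun i _ => by ring
      rw [e1, e2, hcard]
      linear_combination h4 - lam jstar * hsum
    have n1 : 0 ≤ ∑ i ∈ Finset.Iic jstar, (lam jstar - lam i) * (1 - r i) :=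
      Finset.sum_nonneg fun i hi =>
        mul_nonneg (sub_nonneg.2 (hmono (Finset.mem_Iic.1 hi))) (hr1 i)
    have n2 : ∀ i ∈ Finset.Ioi jstar, 0 ≤ (lam i - lam jstar) * r i := fun i hi =>
      mul_nonneg (sub_nonneg.2 (hmono (Finset.mem_Ioi.1 hi).le)) (hr0 i)
    have z2 : ∑ i ∈ Finset.Ioi jstar, (lam i - lam jstar) * r i = 0 := by
      have := Finset.sum_nonneg n2
      linarith
    have z2' : ∀ i ∈ Finset.Ioi jstar, r i = 0 := fun i hi =>
      (mul_eq_zero.1 ((Finset.sum_eq_zero_iff_of_nonneg n2).1 z2 i hi)).resolve_left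
        (sub_pos.2 (hgt i (Finset.mem_Ioi.1 hi))).ne'
    have hRT : R * T = 0 := by
      rw [hT, Finset.mul_sum]
      refine Finset.sum_eq_zero fun i hi => ?_
      rw [Matrix.mul_smul, hR0 i (z2' i hi), smul_zero]
    have z1 : ∑ i ∈ Finset.Iic jstar, (1 - r i) = 0 := by
      rw [Finset.sum_sub_distrib, hcard]
      rw [Finset.sum_eq_zero z2'] at hsum
      linarith
    have z1' := (Finset.sum_eq_zero_iff_of_nonneg (fun i _ => hr1 i)).1 z1
    have hRS : (1 - R) * S = 0 := by
      rw [hS, Finset.mul_sum]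
      refine Finset.sum_eq_zero fun i hi => ?_
      rw [Matrix.mul_smul, hR1 i (z1' i hi), smul_zero]
    calc R = R * (S + T) := by rw [hST, Matrix.mul_one]
      _ = S - (1 - R) * S + R * T := by
        rw [Matrix.mul_add, Matrix.sub_mul, Matrix.one_mul]; abel
      _ = S := by rw [hRS, hRT]; simp
  · rintro rfl
    have hSTz : S * T = 0 := by
      rw [hS, hT, Finset.sum_mul_sum]
      refine Finset.sum_eq_zero fun i hi => Finset.sum_eq_zero fun k hk => ?_
      rw [Matrix.smul_mul, Matrix.mul_smul, hPorth i k, smul_zero, smul_zero]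
      exact ((hmono (Finset.mem_Iic.1 hi)).trans_lt (hgt k (Finset.mem_Ioi.1 hk))).ne
    refine ⟨?_, ?_, htrS, ?_⟩
    · rw [Matrix.IsSymm, hS, Matrix.transpose_sum]
      refine Finset.sum_congr rfl fun i _ => ?_
      rw [Matrix.transpose_smul, (hPsymm i).eq]
    · calc S * S = S * (S + T) := by rw [Matrix.mul_add, hSTz, add_zero]
        _ = S := by rw [hST, Matrix.mul_one]
    · rw [Matrix.trace_mul_comm, hS, Finset.mul_sum, Matrix.trace_sum]
      refine Finset.sum_congr rfl fun i _ => ?_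
      rw [Matrix.mul_smul, hXP, Matrix.trace_smul, Matrix.trace_smul, smul_eq_mul, smul_eq_mul]
      linear_combination lam i * hctr i
end

section
/- Let k ≥ 0 be an integer and let H : Ω → S(m) be of class C^k on Ω. If the number of distinct eigenvalues of H(x) is constant as x ranges over Ω, then every repeated eigenvalue λ_j : Ω → ℝ and every eigenprojection P_j : Ω → S(m) of H is of class C^k in Ω. -/
open scoped Classical

structure EDec {m : ℕ} (A : Matrix (Fin m) (Fin m) ℝ) (l : Fin m → ℝ)
    (p : Fin m → Matrix (Fin m) (Fin m) ℝ) : Prop where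
  mono : Monotone l
  symm : ∀ j, (p j).IsSymm
  idem : ∀ j, p j * p j = p j
  hHP : ∀ j, A * p j = l j • p j
  tr : ∀ j, (p j).trace = ((Finset.univ.filter fun i => l i = l j).card : ℝ)
  eq : ∀ i j, l i = l j → p i = p j
  orth : ∀ i j, l i ≠ l j → p i * p j = 0
  compl : ∑ i, ((Finset.univ.filter fun k => l k = l i).card : ℝ)⁻¹ • p i = 1

namespace EDec

variable {m : ℕ} {A : Matrix (Fin m) (Fin m) ℝ} {l : Fin m → ℝ}
  {p : Fin m → Matrix (Fin m) (Fin m) ℝ}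

noncomputable def w (l : Fin m → ℝ) (i : Fin m) : ℝ :=
  ((Finset.univ.filter fun k => l k = l i).card : ℝ)⁻¹

noncomputable def Q (l : Fin m → ℝ) (p : Fin m → Matrix (Fin m) (Fin m) ℝ)
    (S : Finset (Fin m)) : Matrix (Fin m) (Fin m) ℝ := ∑ i ∈ S, w l i • p i

lemma card_pos (l : Fin m → ℝ) (i : Fin m) :
    (0:ℝ) < ((Finset.univ.filter fun k => l k = l i).card : ℝ) := by
  have : 0 < (Finset.univ.filter fun k => l k = l i).card :=
    Finset.card_pos.mpr ⟨i, by simp⟩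
  exact_mod_cast this

lemma w_pos (l : Fin m → ℝ) (i : Fin m) : 0 < w l i := inv_pos.mpr (card_pos l i)

lemma mulQ (h : EDec A l p) (S : Finset (Fin m))
    (hS : ∀ i k, l i = l k → i ∈ S → k ∈ S) (j : Fin m) :
    p j * Q l p S = if j ∈ S then p j else 0 := by
  unfold Q
  rw [Finset.mul_sum]
  have h1 : ∀ i ∈ S, p j * (w l i • p i) = if l i = l j then w l j • p j else 0 := by
    intro i _
    rw [Matrix.mul_smul]
    split_ifs with hij
    · rw [h.eq i j hij, h.idem, w, w, hij]
    · rw [h.orth j i (fun e => hij e.symm), smul_zero]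
  rw [Finset.sum_congr rfl h1, ← Finset.sum_filter]
  split_ifs with hj
  · have : (S.filter fun i => l i = l j) = Finset.univ.filter fun i => l i = l j := by
      ext i
      simp only [Finset.mem_filter, Finset.mem_univ, true_and, and_iff_right_iff_imp]
      intro hi
      exact hS j i hi.symm hj
    rw [this, Finset.sum_const, ← Nat.cast_smul_eq_nsmul ℝ, smul_smul, w,
      mul_inv_cancel₀ (card_pos l j).ne', one_smul]
  · rw [Finset.filter_false_of_mem, Finset.sum_empty]
    intro i hi e
    exact hj (hS i j e hi)

lemma Qidem (h : EDec A l p) (S : Finset (Fin m))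
    (hS : ∀ i k, l i = l k → i ∈ S → k ∈ S) : Q l p S * Q l p S = Q l p S := by
  conv_lhs => enter [1]; unfold Q
  rw [Finset.sum_mul]
  conv_rhs => unfold Q
  refine Finset.sum_congr rfl fun i hi => ?_
  rw [Matrix.smul_mul, h.mulQ S hS, if_pos hi]

lemma Qtr (h : EDec A l p) (S : Finset (Fin m)) : (Q l p S).trace = S.card := by
  unfold Q
  rw [Matrix.trace_sum]
  have : ∀ i ∈ S, (w l i • p i).trace = 1 := by
    intro i _
    rw [Matrix.trace_smul, h.tr, w, smul_eq_mul, inv_mul_cancel₀ (card_pos l i).ne']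
  rw [Finset.sum_congr rfl this]
  simp

lemma rank_of_idem (B : Matrix (Fin m) (Fin m) ℝ) (hB : B * B = B) :
    (Module.finrank ℝ (LinearMap.range B.toLin') : ℝ) = B.trace := by
  have hp : IsIdempotentElem B.toLin' := by
    unfold IsIdempotentElem
    rw [Module.End.mul_eq_comp, ← Matrix.toLin'_mul, hB]
  have h2 := LinearMap.IsProj.trace (LinearMap.IsIdempotentElem.isProj_range _ hp)
  rw [← h2, Matrix.trace_toLin'_eq]

lemma quad (h : EDec A l p) (v : Fin m → ℝ) :
    v ⬝ᵥ (A.mulVec v) = ∑ i, w l i * l i * ((p i).mulVec v ⬝ᵥ (p i).mulVec v) := by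
  have hA : A = ∑ i, (w l i * l i) • p i := by
    calc A = A * 1 := (mul_one A).symm
      _ = _ := by
        rw [← h.compl, Finset.mul_sum]
        refine Finset.sum_congr rfl fun i _ => ?_
        rw [Matrix.mul_smul, h.hHP, smul_smul, w]
  conv_lhs => rw [hA]
  rw [Matrix.sum_mulVec, dotProduct_sum]
  refine Finset.sum_congr rfl fun i _ => ?_
  rw [Matrix.smul_mulVec, dotProduct_smul, smul_eq_mul]
  congr 1
  conv_lhs => rw [← h.idem i]
  rw [← Matrix.mulVec_mulVec, Matrix.dotProduct_mulVec, ← Matrix.mulVec_transpose, (h.symm i).eq]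

lemma quad1 (h : EDec A l p) (v : Fin m → ℝ) :
    v ⬝ᵥ v = ∑ i, w l i * ((p i).mulVec v ⬝ᵥ (p i).mulVec v) := by
  conv_lhs => enter [2]; rw [← Matrix.one_mulVec v, ← h.compl]
  rw [Matrix.sum_mulVec, dotProduct_sum]
  refine Finset.sum_congr rfl fun i _ => ?_
  rw [Matrix.smul_mulVec, dotProduct_smul, smul_eq_mul]
  congr 1
  conv_lhs => rw [← h.idem i]
  rw [← Matrix.mulVec_mulVec, Matrix.dotProduct_mulVec, ← Matrix.mulVec_transpose, (h.symm i).eq]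

lemma dnn (v : Fin m → ℝ) : 0 ≤ v ⬝ᵥ v := by
  unfold dotProduct
  exact Finset.sum_nonneg fun i _ => mul_self_nonneg _

lemma quad_bound (C : Matrix (Fin m) (Fin m) ℝ) (δ : ℝ) (hC : ∀ i k, |C i k| ≤ δ)
    (v : Fin m → ℝ) : v ⬝ᵥ (C.mulVec v) ≤ m * δ * (v ⬝ᵥ v) := by
  simp only [dotProduct, Matrix.mulVec]
  have h1 : ∀ i k, v i * (C i k * v k) ≤ δ * ((v i * v i + v k * v k) / 2) := by
    intro i k
    have a := abs_le.mp (hC i k)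
    rcases le_total 0 (v i * v k) with hv | hv
    · nlinarith [sq_nonneg (v i - v k), sq_nonneg (v i + v k)]
    · nlinarith [sq_nonneg (v i - v k), sq_nonneg (v i + v k)]
  calc ∑ i, v i * ∑ k, C i k * v k = ∑ i, ∑ k, v i * (C i k * v k) := by
        simp only [Finset.mul_sum]
    _ ≤ ∑ i, ∑ k, δ * ((v i * v i + v k * v k) / 2) :=
        Finset.sum_le_sum fun i _ => Finset.sum_le_sum fun k _ => h1 i k
    _ = _ := by
        simp only [← Finset.mul_sum, ← Finset.sum_div, Finset.sum_add_distrib, Finset.sum_const,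
          Finset.card_univ, Fintype.card_fin, nsmul_eq_mul]
        simp only [mul_left_comm _ (m : ℝ), ← Finset.mul_sum]
        ring

lemma weyl {A' : Matrix (Fin m) (Fin m) ℝ} {l' : Fin m → ℝ}
    {p' : Fin m → Matrix (Fin m) (Fin m) ℝ} (h : EDec A l p) (h' : EDec A' l' p') (δ : ℝ)
    (hδ : ∀ i k, |A' i k - A i k| ≤ δ) (j : Fin m) : l' j ≤ l j + m * δ := by
  by_contra! hlt
  set S := Finset.univ.filter fun i => l i ≤ l j with hSdef
  set S' := Finset.univ.filter fun i => l' i < l' j with hSdef'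
  have hS : ∀ i k, l i = l k → i ∈ S → k ∈ S := by
    intro i k e hi; simp only [hSdef, Finset.mem_filter, Finset.mem_univ, true_and] at *
    rwa [← e]
  have hS' : ∀ i k, l' i = l' k → i ∈ S' → k ∈ S' := by
    intro i k e hi; simp only [hSdef', Finset.mem_filter, Finset.mem_univ, true_and] at *
    rwa [← e]
  have hcard : S'.card < S.card := by
    apply Finset.card_lt_card
    refine Finset.ssubset_iff_subset_ne.mpr ⟨?_, ?_⟩
    · intro i hi
      simp only [hSdef, hSdef', Finset.mem_filter, Finset.mem_univ, true_and] at *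
      exact h.mono (le_of_lt (lt_of_not_ge fun hji => absurd (h'.mono hji) (not_le.mpr hi)))
    · intro e
      have : j ∈ S' := by rw [e]; simp [hSdef]
      simp [hSdef'] at this
  have hr : Module.finrank ℝ (LinearMap.range (Q l' p' S').toLin') <
      Module.finrank ℝ (LinearMap.range (Q l p S).toLin') := by
    have a := rank_of_idem _ (h.Qidem S hS)
    have b := rank_of_idem _ (h'.Qidem S' hS')
    rw [h.Qtr] at a
    rw [h'.Qtr] at b
    have a' : Module.finrank ℝ (LinearMap.range (Q l p S).toLin') = S.card := by exact_mod_cast a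
    have b' : Module.finrank ℝ (LinearMap.range (Q l' p' S').toLin') = S'.card := by
      exact_mod_cast b
    omega
  have hker := LinearMap.ker_ne_bot_of_finrank_lt
    (f := (Q l' p' S').toLin'.rangeRestrict ∘ₗ (LinearMap.range (Q l p S).toLin').subtype) hr
  obtain ⟨⟨v, hv⟩, hvk, hv0⟩ := Submodule.exists_mem_ne_zero_of_ne_bot hker
  have hv0' : v ≠ 0 := fun e => hv0 (by simp [e])
  have hQ' : (Q l' p' S').mulVec v = 0 := by
    have := LinearMap.mem_ker.mp hvk
    simpa [Subtype.ext_iff] using this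
  have hQ : (Q l p S).mulVec v = v := by
    obtain ⟨u, hu⟩ := hv
    rw [Matrix.toLin'_apply] at hu
    rw [← hu, Matrix.mulVec_mulVec, h.Qidem S hS]
  have hp : ∀ i, i ∉ S → (p i).mulVec v = 0 := by
    intro i hi
    rw [← hQ, Matrix.mulVec_mulVec, h.mulQ S hS, if_neg hi, Matrix.zero_mulVec]
  have hp' : ∀ i, i ∈ S' → (p' i).mulVec v = 0 := by
    intro i hi
    have := h'.mulQ S' hS' i
    rw [if_pos hi] at this
    rw [← this, ← Matrix.mulVec_mulVec, hQ', Matrix.mulVec_zero]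
  have e1 : v ⬝ᵥ (A.mulVec v) ≤ l j * (v ⬝ᵥ v) := by
    rw [h.quad, h.quad1, Finset.mul_sum]
    refine Finset.sum_le_sum fun i _ => ?_
    by_cases hi : i ∈ S
    · have hi' : l i ≤ l j := by simpa [hSdef] using hi
      have := mul_nonneg (w_pos l i).le (dnn ((p i).mulVec v))
      nlinarith
    · simp [hp i hi]
  have e2 : l' j * (v ⬝ᵥ v) ≤ v ⬝ᵥ (A'.mulVec v) := by
    rw [h'.quad, h'.quad1, Finset.mul_sum]
    refine Finset.sum_le_sum fun i _ => ?_
    by_cases hi : i ∈ S'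
    · simp [hp' i hi]
    · have hi' : l' j ≤ l' i := by simpa [hSdef'] using hi
      have := mul_nonneg (w_pos l' i).le (dnn ((p' i).mulVec v))
      nlinarith
  have e3 := quad_bound (A' - A) δ (by simpa using hδ) v
  rw [Matrix.sub_mulVec, dotProduct_sub] at e3
  have hpos : 0 < v ⬝ᵥ v := lt_of_le_of_ne (dnn v) (fun e => hv0' (dotProduct_self_eq_zero.mp e.symm))
  nlinarith

lemma weyl_abs {A' : Matrix (Fin m) (Fin m) ℝ} {l' : Fin m → ℝ}
    {p' : Fin m → Matrix (Fin m) (Fin m) ℝ} (h : EDec A l p) (h' : EDec A' l' p') (δ : ℝ)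
    (hδ : ∀ i k, |A' i k - A i k| ≤ δ) (j : Fin m) : |l' j - l j| ≤ m * δ := by
  rw [abs_le]
  have a := weyl h h' δ hδ j
  have b := weyl h' h δ (fun i k => by rw [abs_sub_comm]; exact hδ i k) j
  constructor <;> linarith

/-- Scalar or identity factor of the Lagrange product. -/
noncomputable def fac (A : Matrix (Fin m) (Fin m) ℝ) (l : Fin m → ℝ) (s : Fin m → Prop)
    (j i : Fin m) : Matrix (Fin m) (Fin m) ℝ :=
  if s i then 1 else (l j - l i)⁻¹ • (A - l i • 1)

lemma fac_mul (h : EDec A l p) (s : Fin m → Prop) (j i k : Fin m) :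
    fac A l s j i * p k = (if s i then 1 else (l j - l i)⁻¹ * (l k - l i)) • p k := by
  unfold fac
  split_ifs
  · simp
  · rw [Matrix.smul_mul, Matrix.sub_mul, h.hHP, Matrix.smul_mul, one_mul, ← sub_smul, smul_smul]

lemma prod_mul (h : EDec A l p) (s : Fin m → Prop) (j k : Fin m) (L : List (Fin m)) :
    (L.map (fac A l s j)).prod * p k =
      (L.map fun i => if s i then (1:ℝ) else (l j - l i)⁻¹ * (l k - l i)).prod • p k := by
  induction L with
  | nil => simp
  | cons a L ih =>
    rw [List.map_cons, List.prod_cons, List.map_cons, List.prod_cons, mul_assoc, ih,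
      Matrix.mul_smul, h.fac_mul, smul_smul, mul_comm]

lemma lagrange (h : EDec A l p) (s : Fin m → Prop) (j : Fin m) (hs : ∀ i, s i ↔ l i = l j) :
    p j = ((List.finRange m).map (fac A l s j)).prod := by
  have h1 : ∀ k, ((List.finRange m).map (fac A l s j)).prod * p k = if l k = l j then p k else 0 := by
    intro k
    rw [h.prod_mul]
    split_ifs with hk
    · rw [List.prod_eq_one, one_smul]
      intro x hx
      obtain ⟨i, -, rfl⟩ := List.mem_map.mp hx
      split_ifs with hi
      · rfl
      · rw [hk, inv_mul_cancel₀]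
        intro e
        exact hi ((hs i).mpr (by linarith))
    · rw [List.prod_eq_zero, zero_smul]
      refine List.mem_map.mpr ⟨k, List.mem_finRange k, ?_⟩
      rw [if_neg (by rwa [hs]), sub_self, mul_zero]
  have h2 : ∀ k, p j * p k = if l k = l j then p k else 0 := by
    intro k
    split_ifs with hk
    · rw [h.eq k j hk, h.idem]
    · exact h.orth _ _ (fun e => hk e.symm)
  rw [← mul_one (p j), ← mul_one (List.prod _), ← h.compl, Finset.mul_sum, Finset.mul_sum]
  refine Finset.sum_congr rfl fun i _ => ?_
  rw [Matrix.mul_smul, Matrix.mul_smul, h1, h2]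

end EDec

section smooth
variable {E : Type*} [NormedAddCommGroup E] [NormedSpace ℝ E] {m : ℕ}

lemma cd_mul {r : WithTop ℕ∞} {x : E} {A B : E → Matrix (Fin m) (Fin m) ℝ}
    (hA : ∀ i l, ContDiffAt ℝ r (fun y => A y i l) x)
    (hB : ∀ i l, ContDiffAt ℝ r (fun y => B y i l) x) (i l : Fin m) :
    ContDiffAt ℝ r (fun y => (A y * B y) i l) x := by
  simp only [Matrix.mul_apply]
  exact ContDiffAt.sum fun k _ => (hA i k).mul (hB k l)

lemma cd_list {r : WithTop ℕ∞} {x : E} (F : Fin m → E → Matrix (Fin m) (Fin m) ℝ)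
    (hF : ∀ a i l, ContDiffAt ℝ r (fun y => F a y i l) x) (L : List (Fin m)) (i l : Fin m) :
    ContDiffAt ℝ r (fun y => (L.map fun a => F a y).prod i l) x := by
  induction L generalizing i l with
  | nil => simpa using contDiffAt_const
  | cons a L ih =>
    simp only [List.map_cons, List.prod_cons]
    exact cd_mul (hF a) ih i l

lemma fd_mul {x : E} {φ h : E → ℝ} {h' : E →L[ℝ] ℝ} (hφ : ContinuousAt φ x)
    (hh : HasFDerivAt h h' x) :
    HasFDerivAt (fun y => φ y * (h y - h x)) (φ x • h') x := by
  rw [hasFDerivAt_iff_isLittleO] at hh ⊢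
  have e : (fun y => φ y * (h y - h x) - φ x * (h x - h x) - (φ x • h') (y - x)) =
      fun y => φ y * (h y - h x - h' (y - x)) + (φ y - φ x) * h' (y - x) := by
    funext y
    simp only [ContinuousLinearMap.smul_apply, smul_eq_mul]
    ring
  rw [e]
  refine Asymptotics.IsLittleO.add ?_ ?_
  · have := (hφ.tendsto.isBigO_one ℝ).mul_isLittleO hh.norm_right
    simpa using this
  · have h1 : (fun y => φ y - φ x) =o[nhds x] (fun _ => (1:ℝ)) := by
      rw [Asymptotics.isLittleO_one_iff]
      simpa using (hφ.tendsto.sub_const (φ x))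
    have := h1.mul_isBigO (h'.isBigO_sub (nhds x) x).norm_right
    simpa using this

variable {Ω : Set E} {H : E → Matrix (Fin m) (Fin m) ℝ} {lam : Fin m → E → ℝ}
  {P : Fin m → E → Matrix (Fin m) (Fin m) ℝ}

lemma lam_cont (hΩ : IsOpen Ω) (hD : ∀ x ∈ Ω, EDec (H x) (fun i => lam i x) (fun i => P i x))
    (hH : ∀ i l, ContinuousOn (fun y => H y i l) Ω) {x : E} (hx : x ∈ Ω) (j : Fin m) :
    ContinuousAt (lam j) x := by
  rw [Metric.continuousAt_iff']
  intro ε hε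
  have hδ : 0 < ε / (m + 1) := by positivity
  have h1 : ∀ i l, ∀ᶠ y in nhds x, |H y i l - H x i l| ≤ ε / (m + 1) := by
    intro i l
    have := Metric.continuousAt_iff'.mp ((hH i l).continuousAt (hΩ.mem_nhds hx)) _ hδ
    filter_upwards [this] with y hy
    rw [Real.dist_eq] at hy
    exact hy.le
  have h2 : ∀ᶠ y in nhds x, ∀ i l, |H y i l - H x i l| ≤ ε / (m + 1) := by
    simp only [Filter.eventually_all]
    exact h1
  filter_upwards [h2, hΩ.mem_nhds hx] with y hy hyΩ
  have := EDec.weyl_abs (hD x hx) (hD y hyΩ) _ hy j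
  rw [Real.dist_eq]
  refine lt_of_le_of_lt this ?_
  rw [← mul_div_assoc, div_lt_iff₀ (by positivity)]
  nlinarith

lemma pattern (hΩ : IsOpen Ω) (hc : ∀ x ∈ Ω, ∀ j, ContinuousAt (lam j) x)
    (hconst : ∃ s : ℕ, ∀ x ∈ Ω, (Finset.univ.image fun i => lam i x).card = s)
    {x : E} (hx : x ∈ Ω) :
    ∀ᶠ y in nhds x, ∀ i j, lam i y = lam j y ↔ lam i x = lam j x := by
  obtain ⟨s, hs⟩ := hconst
  have h1 : ∀ᶠ y in nhds x, ∀ i j, lam i x ≠ lam j x → lam i y ≠ lam j y := by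
    simp only [Filter.eventually_all]
    intro i j hij
    have h := ((hc x hx i).sub (hc x hx j)).eventually_ne (sub_ne_zero.mpr hij)
    filter_upwards [h] with y hy
    exact sub_ne_zero.mp hy
  filter_upwards [h1, hΩ.mem_nhds hx] with y hy hyΩ i j
  have hw : ∀ i j, lam i y = lam j y → lam i x = lam j x := fun i j e => by
    by_contra hne
    exact hy i j hne e
  refine ⟨hw i j, fun e => ?_⟩
  let g : ℝ → ℝ := fun t => if h : ∃ i, lam i y = t then lam h.choose x else 0
  have hg : ∀ i, g (lam i y) = lam i x := by
    intro i
    have h : ∃ k, lam k y = lam i y := ⟨i, rfl⟩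
    simp only [g, dif_pos h]
    exact hw _ _ h.choose_spec
  have him : (Finset.univ.image fun i => lam i y).image g = Finset.univ.image fun i => lam i x := by
    rw [Finset.image_image]
    congr 1
    funext i
    exact hg i
  have hinj := Finset.card_image_iff.mp
    (show ((Finset.univ.image fun i => lam i y).image g).card = _ by rw [him, hs x hx, hs y hyΩ])
  exact hinj (by simp) (by simp) (by rw [hg, hg, e])

lemma P_cd (hΩ : IsOpen Ω) (hD : ∀ x ∈ Ω, EDec (H x) (fun i => lam i x) (fun i => P i x))
    {r : WithTop ℕ∞} {x : E} (hx : x ∈ Ω)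
    (hpat : ∀ᶠ y in nhds x, ∀ i j, lam i y = lam j y ↔ lam i x = lam j x)
    (hH : ∀ i l, ContDiffAt ℝ r (fun y => H y i l) x)
    (hl : ∀ i, ContDiffAt ℝ r (lam i) x) (j i l : Fin m) :
    ContDiffAt ℝ r (fun y => P j y i l) x := by
  have hev : (fun y => P j y i l) =ᶠ[nhds x] fun y =>
      ((List.finRange m).map
        fun a => EDec.fac (H y) (fun i => lam i y) (fun i => lam i x = lam j x) j a).prod i l := by
    filter_upwards [hpat, hΩ.mem_nhds hx] with y hy hyΩ
    have := (hD y hyΩ).lagrange (fun i => lam i x = lam j x) j (fun i => (hy i j).symm)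
    exact congrFun (congrFun this i) l
  refine ContDiffAt.congr_of_eventuallyEq ?_ hev
  refine cd_list (fun a y => EDec.fac (H y) (fun i => lam i y) (fun i => lam i x = lam j x) j a)
    (fun a i l => ?_) _ i l
  unfold EDec.fac
  by_cases hs : lam a x = lam j x
  · simp only [hs, if_true]
    exact contDiffAt_const
  · simp only [hs, if_false, Matrix.smul_apply, Matrix.sub_apply, smul_eq_mul]
    refine ContDiffAt.mul (ContDiffAt.inv ((hl j).sub (hl a)) ?_) ((hH i l).sub ((hl a).mul contDiffAt_const))
    exact sub_ne_zero.mpr fun e => hs e.symm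

lemma lam_fderiv (hΩ : IsOpen Ω) (hD : ∀ x ∈ Ω, EDec (H x) (fun i => lam i x) (fun i => P i x))
    (hsymm : ∀ x ∈ Ω, (H x).IsSymm)
    {x : E} (hx : x ∈ Ω) (j : Fin m)
    (hH : ∀ i l, DifferentiableAt ℝ (fun y => H y i l) x)
    (hP : ∀ i l, ContinuousAt (fun y => P j y i l) x) :
    HasFDerivAt (lam j)
      (∑ a, ∑ b, ((P j x).trace⁻¹ * P j x a b) • fderiv ℝ (fun y => H y b a) x) x := by
  have hT : ContinuousAt (fun y => (P j x * P j y).trace) x := by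
    simp only [Matrix.trace, Matrix.diag, Matrix.mul_apply]
    exact tendsto_finsetSum _ fun a _ => tendsto_finsetSum _ fun b _ =>
      (continuousAt_const.mul (hP b a))
  have hT0 : (P j x * P j x).trace ≠ 0 := by
    rw [(hD x hx).idem, (hD x hx).tr]
    exact (EDec.card_pos (fun i => lam i x) j).ne'
  have key : ∀ y ∈ Ω, (lam j y - lam j x) * (P j x * P j y).trace =
      ∑ a, ∑ b, (P j x * P j y) a b * (H y b a - H x b a) := by
    intro y hy
    have h1 : P j y * H y = lam j y • P j y := by
      have := congrArg Matrix.transpose ((hD y hy).hHP j)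
      rwa [Matrix.transpose_mul, (hsymm y hy).eq, Matrix.transpose_smul, ((hD y hy).symm j).eq] at this
    have h2 : ∑ a, ∑ b, (P j x * P j y) a b * (H y b a - H x b a) =
        (P j x * P j y * (H y - H x)).trace := by
      simp only [Matrix.trace, Matrix.diag, Matrix.mul_apply (M := P j x * P j y), Matrix.sub_apply]
    rw [h2, mul_sub, Matrix.trace_sub, mul_assoc, h1, Matrix.mul_smul, Matrix.trace_smul,
      Matrix.trace_mul_comm _ (H x), ← mul_assoc, (hD x hx).hHP, Matrix.smul_mul, Matrix.trace_smul,
      smul_eq_mul, smul_eq_mul]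
    ring
  have hφ : ∀ a b, ContinuousAt (fun y => (P j x * P j y).trace⁻¹ * (P j x * P j y) a b) x := by
    intro a b
    refine (hT.inv₀ hT0).mul ?_
    simp only [Matrix.mul_apply]
    exact tendsto_finsetSum _ fun c _ => continuousAt_const.mul (hP c b)
  have hF : HasFDerivAt (fun y => lam j x + ∑ a, ∑ b,
      ((P j x * P j y).trace⁻¹ * (P j x * P j y) a b) * (H y b a - H x b a))
      (∑ a, ∑ b, ((P j x * P j x).trace⁻¹ * (P j x * P j x) a b) • fderiv ℝ (fun y => H y b a) x) x :=
    HasFDerivAt.const_add _ (HasFDerivAt.fun_sum fun a _ => HasFDerivAt.fun_sum fun b _ =>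
      fd_mul (hφ a b) (hH b a).hasFDerivAt)
  rw [(hD x hx).idem] at hF
  refine hF.congr_of_eventuallyEq ?_
  filter_upwards [hT.eventually_ne hT0, hΩ.mem_nhds hx] with y hy hyΩ
  have := key y hyΩ
  simp only [mul_assoc, ← Finset.mul_sum]
  rw [← this]
  field_simp
  ring

lemma lam_cd (hΩ : IsOpen Ω) (hD : ∀ x ∈ Ω, EDec (H x) (fun i => lam i x) (fun i => P i x))
    (hsymm : ∀ x ∈ Ω, (H x).IsSymm)
    (hconst : ∃ s : ℕ, ∀ x ∈ Ω, (Finset.univ.image fun i => lam i x).card = s) (r : ℕ)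
    (hH : ∀ i l, ContDiffOn ℝ r (fun y => H y i l) Ω) :
    (∀ j, ContDiffOn ℝ r (lam j) Ω) ∧ ∀ j i l, ContDiffOn ℝ r (fun y => P j y i l) Ω := by
  have hc : ∀ x ∈ Ω, ∀ j, ContinuousAt (lam j) x := fun x hx j =>
    lam_cont hΩ hD (fun i l => (hH i l).continuousOn) hx j
  have hP : ∀ r : ℕ, (∀ i l, ContDiffOn ℝ r (fun y => H y i l) Ω) →
      (∀ j, ContDiffOn ℝ r (lam j) Ω) → ∀ j i l, ContDiffOn ℝ r (fun y => P j y i l) Ω := by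
    intro r hH hl j i l x hx
    exact (P_cd hΩ hD hx (pattern hΩ hc hconst hx)
      (fun i l => (hH i l).contDiffAt (hΩ.mem_nhds hx))
      (fun i => (hl i).contDiffAt (hΩ.mem_nhds hx)) j i l).contDiffWithinAt
  suffices h : ∀ j, ContDiffOn ℝ r (lam j) Ω from ⟨h, hP r hH h⟩
  induction r with
  | zero =>
    intro j
    exact contDiffOn_zero.mpr fun x hx => (hc x hx j).continuousWithinAt
  | succ r ih =>
    have hHr : ∀ i l, ContDiffOn ℝ r (fun y => H y i l) Ω := fun i l =>
      (hH i l).of_le (by exact_mod_cast Nat.le_succ r)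
    have hl := ih hHr
    have hPr := hP r hHr hl
    have hHs : ∀ i l, ContDiffOn ℝ ((r : WithTop ℕ∞) + 1) (fun y => H y i l) Ω := fun i l => by
      exact_mod_cast hH i l
    intro j
    have hd : ∀ x ∈ Ω, HasFDerivAt (lam j)
      (∑ a, ∑ b, ((P j x).trace⁻¹ * P j x a b) • fderiv ℝ (fun y => H y b a) x) x := by
      intro x hx
      refine lam_fderiv hΩ hD hsymm hx j (fun i l => ?_) fun i l => ?_
      · exact ((hHs i l).differentiableOn (by simp)).differentiableAt (hΩ.mem_nhds hx)
      · exact (hPr j i l).continuousOn.continuousAt (hΩ.mem_nhds hx)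
    have : ContDiffOn ℝ ((r : WithTop ℕ∞) + 1) (lam j) Ω := by
      rw [contDiffOn_succ_iff_fderiv_of_isOpen hΩ]
      refine ⟨fun x hx => (hd x hx).differentiableAt.differentiableWithinAt, by simp, ?_⟩
      refine ContDiffOn.congr ?_ (fun x hx => (hd x hx).fderiv)
      refine ContDiffOn.sum fun a _ => ContDiffOn.sum fun b _ => ?_
      refine ContDiffOn.smul (ContDiffOn.mul (ContDiffOn.inv ?_ ?_) (hPr j a b)) ?_
      · simp only [Matrix.trace, Matrix.diag]
        exact ContDiffOn.sum fun c _ => hPr j c c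
      · intro x hx
        rw [(hD x hx).tr]
        exact (EDec.card_pos (fun i => lam i x) j).ne'
      · exact ((contDiffOn_succ_iff_fderiv_of_isOpen hΩ).mp (hHs b a)).2.2
    exact_mod_cast this

end smooth

theorem eigen_regularity_of_noncrossing {n m : ℕ} (k : ℕ)
    (Ω : Set (EuclideanSpace ℝ (Fin n))) (hΩo : IsOpen Ω) (hΩc : IsConnected Ω)
    (H : EuclideanSpace ℝ (Fin n) → Matrix (Fin m) (Fin m) ℝ)
    (lam : Fin m → EuclideanSpace ℝ (Fin n) → ℝ)
    (P : Fin m → EuclideanSpace ℝ (Fin n) → Matrix (Fin m) (Fin m) ℝ)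
    (hsymm : ∀ x ∈ Ω, (H x).IsSymm)
    (hmono : ∀ x ∈ Ω, Monotone fun i => lam i x)
    (hPsymm : ∀ (j : Fin m) (x), x ∈ Ω → (P j x).IsSymm)
    (hPidem : ∀ (j : Fin m) (x), x ∈ Ω → P j x * P j x = P j x)
    (hHP : ∀ (j : Fin m) (x), x ∈ Ω → H x * P j x = lam j x • P j x)
    (htr : ∀ (j : Fin m) (x), x ∈ Ω →
      (P j x).trace = ((Finset.univ.filter fun i => lam i x = lam j x).card : ℝ))
    (hPeq : ∀ (i j : Fin m) (x), x ∈ Ω → lam i x = lam j x → P i x = P j x)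
    (hPorth : ∀ (i j : Fin m) (x), x ∈ Ω → lam i x ≠ lam j x → P i x * P j x = 0)
    (hcompl : ∀ x ∈ Ω,
      ∑ i, ((Finset.univ.filter fun k => lam k x = lam i x).card : ℝ)⁻¹ • P i x = 1)
    (hH : ∀ i l, ContDiffOn ℝ (k : ℕ∞) (fun y => H y i l) Ω)
    (hconst : ∃ s : ℕ, ∀ x ∈ Ω, (Finset.univ.image fun i => lam i x).card = s) :
    ∀ j : Fin m,
      ContDiffOn ℝ (k : ℕ∞) (lam j) Ω ∧
      ∀ i l : Fin m, ContDiffOn ℝ (k : ℕ∞) (fun y => P j y i l) Ω := by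
  have hD : ∀ x ∈ Ω, EDec (H x) (fun i => lam i x) (fun i => P i x) := fun x hx =>
    { mono := hmono x hx
      symm := fun j => hPsymm j x hx
      idem := fun j => hPidem j x hx
      hHP := fun j => hHP j x hx
      tr := fun j => htr j x hx
      eq := fun i j => hPeq i j x hx
      orth := fun i j => hPorth i j x hx
      compl := hcompl x hx }
  have := lam_cd hΩo hD hsymm hconst k hH
  exact fun j => ⟨this.1 j, this.2 j⟩
end

section
/- Let M be a compact topological space, let [a,b] ⊂ ℝ, and let U : [a,b] × M → ℝ be continuous and such that the partial derivative ∂U/∂t exists and is jointly continuous on [a,b] × M. Define f(t) := min_{p ∈ M} U(t,p) and Ξ(t) := { p ∈ M : U(t,p) = f(t) }. Then f is Lipschitz on [a,b], and its one-sided derivatives exist and are given by: lim_{h→0⁺} (f(t+h) − f(t))/h = min_{p ∈ Ξ(t)} ∂U/∂t(t,p) for t ∈ [a,b), and lim_{h→0⁻} (f(t+h) − f(t))/h = max_{p ∈ Ξ(t)} ∂U/∂t(t,p) for t ∈ (a,b]. -/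
open Set Filter Topology in
theorem dmin_aux_right {M : Type*} [TopologicalSpace M] [CompactSpace M] [Nonempty M]
    (a b : ℝ)
    (U Ut : ℝ → M → ℝ)
    (hU : ContinuousOn (fun q : ℝ × M => U q.1 q.2) (Set.Icc a b ×ˢ Set.univ))
    (hUt : ∀ t ∈ Set.Icc a b, ∀ p : M,
      HasDerivWithinAt (fun s => U s p) (Ut t p) (Set.Icc a b) t)
    (hUtc : ContinuousOn (fun q : ℝ × M => Ut q.1 q.2) (Set.Icc a b ×ˢ Set.univ))
    (f : ℝ → ℝ) (hle : ∀ t ∈ Set.Icc a b, ∀ p, f t ≤ U t p)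
    (hex : ∀ t ∈ Set.Icc a b, ∃ p, U t p = f t) (t : ℝ) (ht : t ∈ Set.Ico a b) :
    Filter.Tendsto (fun h => (f (t + h) - f t) / h) (nhdsWithin 0 (Set.Ioi 0))
        (nhds (sInf ((fun p => Ut t p) '' {p : M | U t p = f t}))) := by
  have ht' : t ∈ Icc a b := ⟨ht.1, ht.2.le⟩
  have hIcc : ∀ᶠ h in 𝓝[>] (0:ℝ), t + h ∈ Icc a b ∧ 0 < h := by
    filter_upwards [Ioo_mem_nhdsGT (show (0:ℝ) < b - t by linarith [ht.2])] with h hh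
    exact ⟨⟨by linarith [hh.1, ht.1], by linarith [hh.2]⟩, hh.1⟩
  have hcont : Continuous (fun p => Ut t p) := by
    rw [← continuousOn_univ]
    exact hUtc.comp (f := fun p : M => (t, p)) (by fun_prop) (fun p _ => ⟨ht', mem_univ _⟩)
  have hne : ((fun p => Ut t p) '' {p : M | U t p = f t}).Nonempty := by
    obtain ⟨p, hp⟩ := hex t ht'
    exact ⟨_, p, hp, rfl⟩
  have hbdd : BddBelow ((fun p => Ut t p) '' {p : M | U t p = f t}) :=
    (isCompact_range hcont).bddBelow.mono (image_subset_range _ _)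
  rw [tendsto_order]
  constructor
  · intro c' hc'
    obtain ⟨c, hcc, hc⟩ := exists_between hc'
    have key : ∀ᶠ h in 𝓝 (0:ℝ), ∀ p ∈ (univ : Set M),
        (t + h ∈ Icc a b ∧ 0 < h → c * h ≤ U (t + h) p - f t) := by
      apply isCompact_univ.eventually_forall_of_forall_eventually
      intro p _
      have hmap : Tendsto (fun z : ℝ × M => (t + z.1, z.2)) (𝓝 (0, p)) (𝓝 (t, p)) := by
        have : Continuous (fun z : ℝ × M => (t + z.1, z.2)) := by fun_prop
        simpa using this.tendsto (0, p)
      by_cases hp : U t p = f t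
      · have h1 : c < Ut t p := hc.trans_le (csInf_le hbdd ⟨p, hp, rfl⟩)
        have h2 : ∀ᶠ q in 𝓝[Icc a b ×ˢ univ] (t, p), c < Ut q.1 q.2 :=
          (hUtc (t, p) ⟨ht', mem_univ _⟩).eventually (lt_mem_nhds h1)
        rw [eventually_nhdsWithin_iff] at h2
        rw [nhds_prod_eq, eventually_prod_iff] at h2
        obtain ⟨P, hP, Q, hQ, hPQ⟩ := h2
        obtain ⟨ε, hε, hball⟩ := Metric.eventually_nhds_iff.1 hP
        rw [nhds_prod_eq, eventually_prod_iff]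
        refine ⟨fun h => h < ε, gt_mem_nhds hε, Q, hQ, ?_⟩
        rintro h hh q hq ⟨hm, h0⟩
        dsimp only at hm h0 ⊢
        obtain ⟨s, hs, hs2⟩ := exists_hasDerivAt_eq_slope (fun s => U s q) (fun s => Ut s q)
          (show t < t + h by linarith)
          (fun x hx => ((hUt x ⟨ht.1.trans hx.1, hx.2.trans hm.2⟩ q).continuousWithinAt).mono
            (Icc_subset_Icc ht.1 hm.2))
          (fun x hx => (hUt x ⟨ht.1.trans hx.1.le, hx.2.le.trans hm.2⟩ q).hasDerivAt
            (Icc_mem_nhds (ht.1.trans_lt hx.1) (hx.2.trans_le hm.2)))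
        have h3 : c < Ut s q := by
          refine hPQ (x := s) (hball ?_) hq ⟨⟨ht.1.trans hs.1.le, hs.2.le.trans hm.2⟩, mem_univ _⟩
          rw [Real.dist_eq, abs_lt]
          constructor <;> linarith [hs.1, hs.2]
        have h4 : U (t+h) q - U t q = Ut s q * h := by
          rw [hs2, add_sub_cancel_left, div_mul_cancel₀ _ h0.ne']
        nlinarith [hle t ht' q]
      · have h1 : f t < U t p := lt_of_le_of_ne (hle t ht' p) (Ne.symm hp)
        have h2 : ∀ᶠ q in 𝓝[Icc a b ×ˢ univ] (t, p), c * (q.1 - t) < U q.1 q.2 - f t := by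
          have h3 : ContinuousWithinAt (fun q : ℝ × M => U q.1 q.2 - f t - c * (q.1 - t))
              (Icc a b ×ˢ univ) (t, p) :=
            ((hU (t, p) ⟨ht', mem_univ _⟩).sub continuousWithinAt_const).sub
              (Continuous.continuousWithinAt (by fun_prop))
          filter_upwards [h3.eventually (lt_mem_nhds (show (0:ℝ) < _ by simpa using h1))] with q hq
          linarith
        rw [eventually_nhdsWithin_iff] at h2
        filter_upwards [hmap.eventually h2] with z hz hm
        have := hz ⟨hm.1, mem_univ _⟩
        simp only [add_sub_cancel_left] at this
        exact this.le
    filter_upwards [hIcc, key.filter_mono nhdsWithin_le_nhds] with h hh hk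
    obtain ⟨p, hp⟩ := hex _ hh.1
    have := hk p (mem_univ _) hh
    rw [hp] at this
    exact hcc.trans_le ((le_div_iff₀ hh.2).2 this)
  · intro c hc
    obtain ⟨_, ⟨p, hp, rfl⟩, hpc⟩ := (csInf_lt_iff hbdd hne).1 hc
    have hd := (hasDerivWithinAt_iff_tendsto_slope.1 (hUt t ht' p))
    have hm : Tendsto (fun h => t + h) (𝓝[>] (0:ℝ)) (𝓝[Icc a b \ {t}] t) := by
      refine tendsto_nhdsWithin_iff.2 ⟨?_, ?_⟩
      · have : Continuous (fun h => t + h) := by fun_prop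
        simpa using (this.tendsto 0).mono_left nhdsWithin_le_nhds
      · filter_upwards [hIcc] with h hh
        exact ⟨hh.1, by simpa using hh.2.ne'⟩
    filter_upwards [hIcc, (hd.comp hm).eventually (gt_mem_nhds hpc)] with h hh hk
    refine lt_of_le_of_lt ?_ hk
    simp only [Function.comp, slope_def_field, add_sub_cancel_left]
    have hp' : U t p = f t := hp
    rw [hp']
    have := hle _ hh.1 p
    have := hh.2
    gcongr

theorem derivative_of_a_minimum {M : Type*} [TopologicalSpace M] [CompactSpace M] [Nonempty M]
    (a b : ℝ) (hab : a < b)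
    (U Ut : ℝ → M → ℝ)
    (hU : ContinuousOn (fun q : ℝ × M => U q.1 q.2) (Set.Icc a b ×ˢ Set.univ))
    (hUt : ∀ t ∈ Set.Icc a b, ∀ p : M,
      HasDerivWithinAt (fun s => U s p) (Ut t p) (Set.Icc a b) t)
    (hUtc : ContinuousOn (fun q : ℝ × M => Ut q.1 q.2) (Set.Icc a b ×ˢ Set.univ))
    (f : ℝ → ℝ) (hf : ∀ t, f t = ⨅ p : M, U t p) :
    (∃ K : NNReal, LipschitzOnWith K f (Set.Icc a b)) ∧
    (∀ t ∈ Set.Ico a b,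
      Filter.Tendsto (fun h => (f (t + h) - f t) / h) (nhdsWithin 0 (Set.Ioi 0))
        (nhds (sInf ((fun p => Ut t p) '' {p : M | U t p = f t})))) ∧
    (∀ t ∈ Set.Ioc a b,
      Filter.Tendsto (fun h => (f (t + h) - f t) / h) (nhdsWithin 0 (Set.Iio 0))
        (nhds (sSup ((fun p => Ut t p) '' {p : M | U t p = f t})))) := by
  have hUc : ∀ t ∈ Set.Icc a b, Continuous (fun p => U t p) := by
    intro t ht
    rw [← continuousOn_univ]
    exact hU.comp (f := fun p : M => (t, p)) (by fun_prop) (fun p _ => ⟨ht, Set.mem_univ _⟩)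
  have hle : ∀ t ∈ Set.Icc a b, ∀ p, f t ≤ U t p := by
    intro t ht p
    rw [hf]
    exact ciInf_le (isCompact_range (hUc t ht)).bddBelow p
  have hex : ∀ t ∈ Set.Icc a b, ∃ p, U t p = f t := by
    intro t ht
    obtain ⟨p, hp⟩ := (isCompact_range (hUc t ht)).sInf_mem (Set.range_nonempty _)
    exact ⟨p, by rw [hf]; exact hp⟩
  refine ⟨?_, fun t ht => dmin_aux_right a b U Ut hU hUt hUtc f hle hex t ht, ?_⟩
  · obtain ⟨C, hC⟩ := (isCompact_Icc.prod isCompact_univ).exists_bound_of_continuousOn hUtc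
    refine ⟨C.toNNReal, LipschitzOnWith.of_le_add_mul _ ?_⟩
    intro x hx y hy
    obtain ⟨p, hp⟩ := hex y hy
    have h1 := hle x hx p
    have h2 := (convex_Icc a b).norm_image_sub_le_of_norm_hasDerivWithin_le
      (f := fun s => U s p) (f' := fun s => Ut s p) (C := C)
      (fun s hs => hUt s hs p) (fun s hs => hC (s, p) ⟨hs, Set.mem_univ _⟩) hy hx
    rw [Real.dist_eq]
    rw [Real.norm_eq_abs, Real.norm_eq_abs] at h2
    have h3 : C * |x - y| ≤ C.toNNReal * |x - y| := by
      gcongr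
      exact Real.le_coe_toNNReal C
    have h4 := le_abs_self (U x p - U y p)
    linarith
  · intro t ht
    have hmaps : Set.MapsTo (fun s : ℝ => -s) (Set.Icc (-b) (-a)) (Set.Icc a b) := by
      intro s hs
      exact ⟨by linarith [hs.2], by linarith [hs.1]⟩
    have hmaps2 : Set.MapsTo (fun q : ℝ × M => (-q.1, q.2)) (Set.Icc (-b) (-a) ×ˢ Set.univ)
        (Set.Icc a b ×ˢ Set.univ) := fun q hq => ⟨hmaps hq.1, Set.mem_univ _⟩
    have hc2 : ContinuousOn (fun q : ℝ × M => (-q.1, q.2)) (Set.Icc (-b) (-a) ×ˢ Set.univ) :=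
      Continuous.continuousOn (by fun_prop)
    have key := dmin_aux_right (-b) (-a) (fun s p => U (-s) p) (fun s p => - Ut (-s) p)
      (hU.comp hc2 hmaps2)
      (by
        intro s hs p
        have := (hUt (-s) (hmaps hs) p).scomp s (hasDerivWithinAt_neg s _) hmaps
        simpa [Function.comp_def] using this)
      ((hUtc.comp hc2 hmaps2).neg)
      (fun s => f (-s)) (fun s hs p => hle _ (hmaps hs) p) (fun s hs => hex _ (hmaps hs))
      (-t) ⟨by linarith [ht.2], by linarith [ht.1]⟩
    simp only [neg_neg] at key
    have himg : (fun p => - Ut t p) '' {p : M | U t p = f t}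
        = - ((fun p => Ut t p) '' {p : M | U t p = f t}) := by
      rw [← Set.image_neg_eq_neg, Set.image_image]
    rw [himg, Real.sInf_def, neg_neg] at key
    have hm : Filter.Tendsto (fun h : ℝ => -h) (nhdsWithin 0 (Set.Iio 0))
        (nhdsWithin 0 (Set.Ioi 0)) := by
      simpa using tendsto_neg_nhdsLT (a := (0:ℝ))
    have := (key.comp hm).neg
    rw [neg_neg] at this
    refine this.congr ?_
    intro h
    simp only [Function.comp, div_neg, neg_neg, neg_add]
end

section
/- Let H : Ω → S(m) be continuous on the open connected set Ω, with repeated eigenvalues λ_1(x) ≤ … ≤ λ_m(x) of multiplicities d_i(x), and define j_*(x) := min{ i : λ_i(x) = λ_j(x) } and j^*(x) := max{ i : λ_i(x) = λ_j(x) }. Then: (i) if the number of distinct eigenvalues s_m(x) = |{λ_1(x),…,λ_m(x)}| is constant on Ω, then every multiplicity function d_j is constant on Ω; (ii) if d_j is constant on Ω, then j_* and j^* are constant on Ω. -/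
open scoped Classical

lemma aux_sorted {m : ℕ} (f g : Fin m → ℝ) (hf : Monotone f) (hg : Monotone g)
    (h : ∀ k : ℕ, ∑ i, f i ^ k = ∑ i, g i ^ k) : f = g := by
  have hq : ∀ q : Polynomial ℝ, ∑ i, q.eval (f i) = ∑ i, q.eval (g i) := by
    intro q
    simp only [Polynomial.eval_eq_sum_range]
    rw [Finset.sum_comm, Finset.sum_comm (s := Finset.univ)]
    refine Finset.sum_congr rfl fun k _ => ?_
    rw [← Finset.mul_sum, ← Finset.mul_sum, h k]
  have hcount : ∀ a : ℝ, (Finset.univ.filter fun i => a = f i).card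
      = (Finset.univ.filter fun i => a = g i).card := by
    intro a
    let S : Finset ℝ := insert a (Finset.univ.image f ∪ Finset.univ.image g)
    let q : Polynomial ℝ := Lagrange.interpolate S id (fun t => if a = t then 1 else 0)
    have hqe : ∀ t ∈ S, q.eval t = if a = t then 1 else 0 := by
      intro t ht
      exact Lagrange.eval_interpolate_at_node (v := id) (fun t => if a = t then (1:ℝ) else 0)
        Function.injective_id.injOn ht
    have := hq q
    rw [Finset.sum_congr rfl (fun i _ => hqe (f i) (by simp [S])),
      Finset.sum_congr rfl (fun i _ => hqe (g i) (by simp [S]))] at this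
    simp only [Finset.sum_boole] at this
    exact_mod_cast this
  have hms : Multiset.map f Finset.univ.val = Multiset.map g Finset.univ.val := by
    ext a
    rw [Multiset.count_map, Multiset.count_map]
    exact hcount a
  rw [Fin.univ_val_map, Fin.univ_val_map, Multiset.coe_eq_coe] at hms
  exact List.ofFn_injective (hms.eq_of_sortedLE hf.sortedLE_ofFn hg.sortedLE_ofFn)

lemma aux_const {E : Type*} [TopologicalSpace E] {α : Type*} {Ω : Set E} (hΩc : IsConnected Ω)
    (F : E → α) (hF : ∀ x₀ ∈ Ω, ∀ᶠ x in nhdsWithin x₀ Ω, F x = F x₀) :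
    ∃ c, ∀ x ∈ Ω, F x = c := by
  letI : TopologicalSpace α := ⊥
  haveI : DiscreteTopology α := ⟨rfl⟩
  obtain ⟨x₁, hx₁⟩ := hΩc.nonempty
  have hc : ContinuousOn F Ω := by
    intro x hx
    exact (tendsto_const_nhds).congr' ((hF x hx).mono fun y hy => hy.symm)
  exact ⟨F x₁, fun x hx => hΩc.isPreconnected.constant hc hx hx₁⟩

theorem constancy_of_multiplicities_and_indexes {n m : ℕ}
    (Ω : Set (EuclideanSpace ℝ (Fin n))) (hΩo : IsOpen Ω) (hΩc : IsConnected Ω)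
    (H : EuclideanSpace ℝ (Fin n) → Matrix (Fin m) (Fin m) ℝ)
    (lam : Fin m → EuclideanSpace ℝ (Fin n) → ℝ)
    (P : Fin m → EuclideanSpace ℝ (Fin n) → Matrix (Fin m) (Fin m) ℝ)
    (hsymm : ∀ x ∈ Ω, (H x).IsSymm)
    (hmono : ∀ x ∈ Ω, Monotone fun i => lam i x)
    (hPsymm : ∀ (j : Fin m) (x), x ∈ Ω → (P j x).IsSymm)
    (hPidem : ∀ (j : Fin m) (x), x ∈ Ω → P j x * P j x = P j x)
    (hHP : ∀ (j : Fin m) (x), x ∈ Ω → H x * P j x = lam j x • P j x)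
    (htr : ∀ (j : Fin m) (x), x ∈ Ω →
      (P j x).trace = ((Finset.univ.filter fun i => lam i x = lam j x).card : ℝ))
    (hPeq : ∀ (i j : Fin m) (x), x ∈ Ω → lam i x = lam j x → P i x = P j x)
    (hPorth : ∀ (i j : Fin m) (x), x ∈ Ω → lam i x ≠ lam j x → P i x * P j x = 0)
    (hcompl : ∀ x ∈ Ω,
      ∑ i, ((Finset.univ.filter fun k => lam k x = lam i x).card : ℝ)⁻¹ • P i x = 1)
    (hHc : ∀ i k, ContinuousOn (fun y => H y i k) Ω) :
    ((∃ s : ℕ, ∀ x ∈ Ω, (Finset.univ.image fun i => lam i x).card = s) →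
      ∀ j : Fin m, ∃ c : ℕ, ∀ x ∈ Ω,
        (Finset.univ.filter fun i => lam i x = lam j x).card = c) ∧
    (∀ j : Fin m,
      (∃ c : ℕ, ∀ x ∈ Ω, (Finset.univ.filter fun i => lam i x = lam j x).card = c) →
        (∃ c₁ : ℕ, ∀ x ∈ Ω,
          sInf {i : ℕ | ∃ h : i < m, lam ⟨i, h⟩ x = lam j x} = c₁) ∧
        (∃ c₂ : ℕ, ∀ x ∈ Ω,
          sSup {i : ℕ | ∃ h : i < m, lam ⟨i, h⟩ x = lam j x} = c₂)) := by
  have hpow : ∀ (k : ℕ), ∀ x ∈ Ω, ((H x) ^ k).trace = ∑ i, lam i x ^ k := by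
    intro k x hx
    have hk : ∀ i, (H x) ^ k * P i x = lam i x ^ k • P i x := by
      intro i
      induction k with
      | zero => simp
      | succ k ih =>
        rw [pow_succ, Matrix.mul_assoc, hHP i x hx, Matrix.mul_smul, ih, smul_smul, pow_succ,
          mul_comm]
    rw [← Matrix.mul_one ((H x) ^ k), ← hcompl x hx, Matrix.mul_sum, Matrix.trace_sum]
    refine Finset.sum_congr rfl fun i _ => ?_
    rw [Matrix.mul_smul, hk, Matrix.trace_smul, Matrix.trace_smul, htr i x hx]
    have : ((Finset.univ.filter fun k => lam k x = lam i x).card : ℝ) ≠ 0 := by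
      have : (Finset.univ.filter fun k => lam k x = lam i x).Nonempty := ⟨i, by simp⟩
      exact_mod_cast this.card_pos.ne'
    simp only [smul_eq_mul]
    field_simp
  have hHcont : ContinuousOn H Ω :=
    continuousOn_pi.2 fun i => continuousOn_pi.2 fun k => hHc i k
  have hpc : ∀ k : ℕ, ContinuousOn (fun x => ∑ i, lam i x ^ k) Ω := by
    intro k
    have h1 : Continuous fun A : Matrix (Fin m) (Fin m) ℝ => (A ^ k).trace := by fun_prop
    exact (h1.comp_continuousOn hHcont).congr fun x hx => (hpow k x hx).symm
  have hlam : ∀ x₀ ∈ Ω, Filter.Tendsto (fun x i => lam i x) (nhdsWithin x₀ Ω)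
      (nhds fun i => lam i x₀) := by
    intro x₀ hx₀
    set R := (∑ i, lam i x₀ ^ 2) + 1 with hR
    have hRpos : 0 ≤ R := by positivity
    refine (isCompact_closedBall (0 : Fin m → ℝ) (Real.sqrt R)).tendsto_nhds_of_unique_mapClusterPt
      ?_ ?_
    · have : ∀ᶠ x in nhdsWithin x₀ Ω, ∑ i, lam i x ^ 2 < R :=
        (hpc 2 x₀ hx₀).eventually (gt_mem_nhds (by simp [hR]))
      filter_upwards [this] with x hx
      rw [mem_closedBall_zero_iff, pi_norm_le_iff_of_nonneg (Real.sqrt_nonneg _)]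
      intro i
      rw [Real.norm_eq_abs]
      apply Real.abs_le_sqrt
      exact (Finset.single_le_sum (f := fun i => lam i x ^ 2) (fun i _ => sq_nonneg _)
        (Finset.mem_univ i)).trans hx.le
    · intro y _ hy
      obtain ⟨U, hU, hUy⟩ := mapClusterPt_iff_ultrafilter.1 hy
      have hyi := tendsto_pi_nhds.1 hUy
      have hmem : ∀ᶠ x in (U : Filter _), x ∈ Ω := hU self_mem_nhdsWithin
      apply aux_sorted _ _ _ (hmono x₀ hx₀)
      · intro k
        have h1 : Filter.Tendsto (fun x => ∑ i, lam i x ^ k) U (nhds (∑ i, y i ^ k)) :=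
          tendsto_finsetSum _ fun i _ => (hyi i).pow k
        exact tendsto_nhds_unique h1 ((hpc k x₀ hx₀).mono_left hU)
      · intro i j hij
        exact le_of_tendsto_of_tendsto (hyi i) (hyi j)
          (hmem.mono fun x hx => hmono x hx hij)
  have hne : ∀ x₀ ∈ Ω, ∀ᶠ x in nhdsWithin x₀ Ω,
      ∀ i j, lam i x = lam j x → lam i x₀ = lam j x₀ := by
    intro x₀ hx₀
    have h := tendsto_pi_nhds.1 (hlam x₀ hx₀)
    rw [Filter.eventually_all]
    intro i
    rw [Filter.eventually_all]
    intro j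
    by_cases hij : lam i x₀ = lam j x₀
    · exact Filter.Eventually.of_forall fun _ _ => hij
    · filter_upwards [((h i).sub (h j)).eventually_ne (sub_ne_zero.2 hij)] with x hx h2
      exact absurd (sub_eq_zero.2 h2) hx
  constructor
  · rintro ⟨s, hs⟩ j
    obtain ⟨c, hc⟩ := aux_const hΩc (fun x => Finset.univ.filter fun i => lam i x = lam j x) (by
      intro x₀ hx₀
      filter_upwards [hne x₀ hx₀, self_mem_nhdsWithin] with x hx hxΩ
      have hfac : ∃ g : ℝ → ℝ, ∀ i, g (lam i x) = lam i x₀ := by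
        have hft : Function.FactorsThrough (fun i => lam i x₀) (fun i => lam i x) :=
          fun i k hik => hx i k hik
        exact ⟨Function.extend (fun i => lam i x) (fun i => lam i x₀) (fun _ => 0),
          fun i => hft.extend_apply _ i⟩
      obtain ⟨g, hg⟩ := hfac
      have him : ((Finset.univ.image fun i => lam i x).image g)
          = Finset.univ.image fun i => lam i x₀ := by
        rw [Finset.image_image]
        exact Finset.image_congr fun i _ => hg i
      have hinj : Set.InjOn g (Finset.univ.image fun i => lam i x : Finset ℝ) := by
        apply Finset.card_image_iff.1
        rw [him, hs x hxΩ, hs x₀ hx₀]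
      ext i
      simp only [Finset.mem_filter, Finset.mem_univ, true_and]
      refine ⟨hx i j, fun h => hinj (by simp) (by simp) ?_⟩
      rw [hg, hg, h])
    exact ⟨c.card, fun x hx => by rw [← hc x hx]⟩
  · rintro j ⟨d, hd⟩
    obtain ⟨c, hc⟩ := aux_const hΩc (fun x => Finset.univ.filter fun i => lam i x = lam j x) (by
      intro x₀ hx₀
      filter_upwards [hne x₀ hx₀, self_mem_nhdsWithin] with x hx hxΩ
      apply Finset.eq_of_subset_of_card_le
      · intro i hi
        simp only [Finset.mem_filter, Finset.mem_univ, true_and] at hi ⊢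
        exact hx i j hi
      · rw [hd x hxΩ, hd x₀ hx₀])
    have hset : ∀ x ∈ Ω, {i : ℕ | ∃ h : i < m, lam ⟨i, h⟩ x = lam j x}
        = {i : ℕ | ∃ h : i < m, (⟨i, h⟩ : Fin m) ∈ c} := by
      intro x hx
      rw [← hc x hx]
      simp
    exact ⟨⟨_, fun x hx => by rw [hset x hx]⟩, ⟨_, fun x hx => by rw [hset x hx]⟩⟩
end
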